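/- Let Γ be a y-monotone poly-line drawing of height h of a finite simple planar graph G. Then G has a planar straight-line drawing with the same y-coordinates as Γ and the same left-to-right order in each row; in particular, this straight-line drawing has height h. -/

import Mathlib

open Set

/-- A point in the plane. -/
abbrev Pt : Type := ℝ × ℝ

/-- A point has integer coordinates. -/
def IsIntPt (p : Pt) : Prop := (∃ a : ℤ, p.1 = (a : ℝ)) ∧ (∃ b : ℤ, p.2 = (b : ℝ))

/-- The (closed) segments of a polygonal chain, as pairs of consecutive corners. -/
def chainSegs (l : List Pt) : List (Pt × Pt) := l.zip l.tail

/-- The set of points covered by a polygonal chain. -/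
def chainSet (l : List Pt) : Set Pt := ⋃ s ∈ chainSegs l, segment ℝ s.1 s.2

/-- A polygonal chain is simple (non-self-intersecting): it has at least two
corners, all corners are distinct, and two of its segments meet only if they are
consecutive, and then only in their shared corner. -/
def IsSimpleChain (l : List Pt) : Prop :=
  2 ≤ l.length ∧ l.Nodup ∧
    ∀ i j : ℕ, i < j → ∀ (hi : i < (chainSegs l).length) (hj : j < (chainSegs l).length),
      segment ℝ ((chainSegs l).get ⟨i, hi⟩).1 ((chainSegs l).get ⟨i, hi⟩).2 ∩
        segment ℝ ((chainSegs l).get ⟨j, hj⟩).1 ((chainSegs l).get ⟨j, hj⟩).2 ⊆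
        if j = i + 1 then {((chainSegs l).get ⟨j, hj⟩).1} else (∅ : Set Pt)

/-- Every interior corner of the chain is a genuine bend (a direction change). -/
def GenuineBends (l : List Pt) : Prop :=
  ∀ i : ℕ, ∀ h : i + 2 < l.length,
    ¬ Collinear ℝ ({l.get ⟨i, by omega⟩, l.get ⟨i + 1, by omega⟩, l.get ⟨i + 2, h⟩} : Set Pt)

/-- The chain is a y-monotone path (horizontal segments allowed). -/
def IsMonoChain (l : List Pt) : Prop :=
  (l.map Prod.snd).Chain' (· ≤ ·) ∨ (l.map Prod.snd).Chain' (fun a b => b ≤ a)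

/-- All segments of the chain are horizontal or vertical. -/
def IsOrthoChain (l : List Pt) : Prop :=
  ∀ s ∈ chainSegs l, s.1.1 = s.2.1 ∨ s.1.2 = s.2.2

/-- A poly-line drawing of a graph `G`: every vertex is a point, and every edge
`uv` is the polygonal chain through the list `bends u v` of bend points
(listed in order from `u` to `v`). -/
structure PolylineDrawing {V : Type*} (G : SimpleGraph V) where
  pos : V → Pt
  bends : V → V → List Pt
  bends_symm : ∀ u v, bends v u = (bends u v).reverse

namespace PolylineDrawing

variable {V : Type*} {G : SimpleGraph V}

/-- The corner list of the curve of edge `uv`. -/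
def chain (D : PolylineDrawing G) (u v : V) : List Pt :=
  D.pos u :: (D.bends u v ++ [D.pos v])

/-- The set of points of the curve of edge `uv`. -/
def curve (D : PolylineDrawing G) (u v : V) : Set Pt := chainSet (D.chain u v)

/-- The defining elements of the drawing: vertex points and bends. -/
def points (D : PolylineDrawing G) : Set Pt :=
  Set.range D.pos ∪ ⋃ (u) (v) (_ : G.Adj u v), {p | p ∈ D.bends u v}

/-- The drawing is planar: vertex points are pairwise distinct, every edge curve
is a simple chain whose interior corners are genuine bends, an edge curve contains
no vertex point other than its endpoints, and two distinct edge curves intersect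
only in points of common endpoints. -/
def IsPlanar (D : PolylineDrawing G) : Prop :=
  Function.Injective D.pos ∧
  (∀ u v, G.Adj u v → IsSimpleChain (D.chain u v) ∧ GenuineBends (D.chain u v)) ∧
  (∀ u v w, G.Adj u v → w ≠ u → w ≠ v → D.pos w ∉ D.curve u v) ∧
  (∀ u v x y, G.Adj u v → G.Adj x y → s(u, v) ≠ s(x, y) →
    D.curve u v ∩ D.curve x y ⊆ D.pos '' (({u, v} : Set V) ∩ ({x, y} : Set V)))

/-- All defining elements have integer coordinates. -/
def IntCoords (D : PolylineDrawing G) : Prop := ∀ p ∈ D.points, IsIntPt p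

/-- A straight-line drawing: no edge has bends. -/
def IsStraightLine (D : PolylineDrawing G) : Prop := ∀ u v : V, D.bends u v = []

/-- Every edge curve is a y-monotone path. -/
def IsYMonotone (D : PolylineDrawing G) : Prop :=
  ∀ u v, G.Adj u v → IsMonoChain (D.chain u v)

/-- The drawing fits (after translation) in the rows `1, …, h`. -/
def InHeight (D : PolylineDrawing G) (h : ℕ) : Prop :=
  ∃ y0 : ℤ, ∀ p ∈ D.points, (y0 : ℝ) ≤ p.2 ∧ p.2 ≤ (y0 : ℝ) + (h : ℝ) - 1

/-- The drawing fits (after translation) in the columns `1, …, w`. -/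
def InWidth (D : PolylineDrawing G) (w : ℕ) : Prop :=
  ∃ x0 : ℤ, ∀ p ∈ D.points, (x0 : ℝ) ≤ p.1 ∧ p.1 ≤ (x0 : ℝ) + (w : ℝ) - 1

end PolylineDrawing

/-- An axis-parallel box (possibly degenerated to a segment or a point). -/
structure Box where
  x1 : ℝ
  x2 : ℝ
  y1 : ℝ
  y2 : ℝ
  hx : x1 ≤ x2
  hy : y1 ≤ y2

/-- The set of points of a box. -/
def Box.pts (b : Box) : Set Pt := Set.Icc b.x1 b.x2 ×ˢ Set.Icc b.y1 b.y2

/-- An orthogonal drawing of a graph `G`: every vertex is an axis-aligned box, and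
every edge `uv` is an axis-parallel polygonal chain `chain u v` (its first corner is
the attachment point on the box of `u`, its last corner the attachment point on the
box of `v`). -/
structure OrthDrawing {V : Type*} (G : SimpleGraph V) where
  box : V → Box
  chain : V → V → List Pt
  chain_symm : ∀ u v, chain v u = (chain u v).reverse

namespace OrthDrawing

variable {V : Type*} {G : SimpleGraph V}

/-- The set of points of the curve of edge `uv`. -/
def curve (D : OrthDrawing G) (u v : V) : Set Pt := chainSet (D.chain u v)

/-- The defining elements of the drawing: corners of vertex boxes, and corners
(attachment points and bends) of edge chains. -/
def points (D : OrthDrawing G) : Set Pt :=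
  (⋃ v, ({((D.box v).x1, (D.box v).y1), ((D.box v).x1, (D.box v).y2),
          ((D.box v).x2, (D.box v).y1), ((D.box v).x2, (D.box v).y2)} : Set Pt)) ∪
    ⋃ (u) (v) (_ : G.Adj u v), {p | p ∈ D.chain u v}

/-- All points covered by the drawing (boxes and edge curves). -/
def region (D : OrthDrawing G) : Set Pt :=
  (⋃ v, (D.box v).pts) ∪ ⋃ (u) (v) (_ : G.Adj u v), D.curve u v

/-- The drawing is planar: vertex boxes are pairwise disjoint; every edge curve is a
simple axis-parallel chain, with genuine bends, joining the boxes of its endpoints;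
an edge curve meets a vertex box only in its attachment points; and two distinct
edge curves intersect only in common endpoints. -/
def IsPlanar (D : OrthDrawing G) : Prop :=
  (∀ u v : V, u ≠ v → Disjoint (D.box u).pts (D.box v).pts) ∧
  (∀ u v, G.Adj u v → IsSimpleChain (D.chain u v) ∧ IsOrthoChain (D.chain u v) ∧
      GenuineBends (D.chain u v)) ∧
  (∀ u v, G.Adj u v → ∃ p q l, D.chain u v = p :: (l ++ [q]) ∧
      p ∈ (D.box u).pts ∧ q ∈ (D.box v).pts) ∧
  (∀ u v w, G.Adj u v → D.curve u v ∩ (D.box w).pts ⊆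
      {p | (w = u ∧ (D.chain u v).head? = some p) ∨
           (w = v ∧ (D.chain u v).getLast? = some p)}) ∧
  (∀ u v x y, G.Adj u v → G.Adj x y → s(u, v) ≠ s(x, y) →
      D.curve u v ∩ D.curve x y ⊆
        {p | ((D.chain u v).head? = some p ∨ (D.chain u v).getLast? = some p) ∧
             ((D.chain x y).head? = some p ∨ (D.chain x y).getLast? = some p)})

/-- A flat drawing: every vertex box is degenerated to a horizontal segment. -/
def IsFlat (D : OrthDrawing G) : Prop := ∀ v, (D.box v).y1 = (D.box v).y2

/-- A visibility representation: an orthogonal drawing without bends, i.e. every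
edge is a single horizontal or vertical segment. -/
def IsVR (D : OrthDrawing G) : Prop := ∀ u v, G.Adj u v → (D.chain u v).length = 2

/-- Every edge curve is a y-monotone path. -/
def IsYMonotone (D : OrthDrawing G) : Prop := ∀ u v, G.Adj u v → IsMonoChain (D.chain u v)

/-- All defining elements have integer coordinates. -/
def IntCoords (D : OrthDrawing G) : Prop := ∀ p ∈ D.points, IsIntPt p

/-- The drawing fits (after translation) in the rows `1, …, h`. -/
def InHeight (D : OrthDrawing G) (h : ℕ) : Prop :=
  ∃ y0 : ℤ, ∀ p ∈ D.points, (y0 : ℝ) ≤ p.2 ∧ p.2 ≤ (y0 : ℝ) + (h : ℝ) - 1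

/-- The drawing fits (after translation) in the columns `1, …, w`. -/
def InWidth (D : OrthDrawing G) (w : ℕ) : Prop :=
  ∃ x0 : ℤ, ∀ p ∈ D.points, (x0 : ℝ) ≤ p.1 ∧ p.1 ≤ (x0 : ℝ) + (w : ℝ) - 1

end OrthDrawing

/-! ### Combinatorial core: proper level graphs and a maximum principle -/

/-- A properly levelled plane graph: nodes in rows with left-to-right positions, and strip edges
joining consecutive rows, in a compatible left-to-right order. Some nodes are dummies (subdivision
nodes of long edges). -/
structure LevelGraph (N S : Type) where
  row : N → ℤ
  r : N → ℝ
  lo : S → N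
  hi : S → N
  q : S → ℝ
  d : N → Prop
  up : N → S
  dn : N → S
  ed : S → N × N
  r_inj : ∀ n n', row n = row n' → r n = r n' → n = n'
  row_hi : ∀ s, row (hi s) = row (lo s) + 1
  q_inj : ∀ s s', row (lo s) = row (lo s') → q s = q s' → s = s'
  lo_mono : ∀ s s', row (lo s) = row (lo s') → q s < q s' → r (lo s) ≤ r (lo s')
  hi_mono : ∀ s s', row (lo s) = row (lo s') → q s < q s' → r (hi s) ≤ r (hi s')
  up_iff : ∀ n, d n → ∀ s, lo s = n ↔ s = up n
  dn_iff : ∀ n, d n → ∀ s, hi s = n ↔ s = dn n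
  ed_lo : ∀ s, ¬ d (lo s) → (ed s).1 = lo s
  ed_hi : ∀ s, ¬ d (hi s) → (ed s).2 = hi s
  ed_up : ∀ n, d n → ed (up n) = ed (dn n)
  ed_inj : ∀ s s', row (lo s) = row (lo s') → ed s = ed s' → s = s'

set_option linter.unusedSectionVars false

namespace LevelGraph

open scoped Classical

variable {N S : Type} [Fintype N] [Fintype S] (L : LevelGraph N S)

/-- A lower cut of the row `y`. -/
def IsCut (y : ℤ) (C : Finset N) : Prop :=
  (∀ n ∈ C, L.row n = y) ∧ ∀ n ∈ C, ∀ n', L.row n' = y → L.r n' ≤ L.r n → n' ∈ C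

/-- A lower cut of the strip above row `y`. -/
def IsSCut (y : ℤ) (U : Finset S) : Prop :=
  (∀ s ∈ U, L.row (L.lo s) = y) ∧
    ∀ s ∈ U, ∀ s', L.row (L.lo s') = y → L.q s' ≤ L.q s → s' ∈ U

noncomputable def RS (s : S) : Finset S :=
  Finset.univ.filter fun s' => L.row (L.lo s') = L.row (L.lo s) ∧ L.q s' ≤ L.q s
noncomputable def LS (s : S) : Finset S :=
  Finset.univ.filter fun s' => L.row (L.lo s') = L.row (L.lo s) ∧ L.q s' < L.q s
noncomputable def RN (n : N) : Finset N :=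
  Finset.univ.filter fun n' => L.row n' = L.row n ∧ L.r n' ≤ L.r n
noncomputable def LN (n : N) : Finset N :=
  Finset.univ.filter fun n' => L.row n' = L.row n ∧ L.r n' < L.r n
noncomputable def upS (C : Finset N) : Finset S := Finset.univ.filter fun s => L.lo s ∈ C
noncomputable def dnS (C : Finset N) : Finset S := Finset.univ.filter fun s => L.hi s ∈ C

lemma mem_RS (s s' : S) : s' ∈ L.RS s ↔ L.row (L.lo s') = L.row (L.lo s) ∧ L.q s' ≤ L.q s := by
  simp [RS]
lemma mem_LS (s s' : S) : s' ∈ L.LS s ↔ L.row (L.lo s') = L.row (L.lo s) ∧ L.q s' < L.q s := by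
  simp [LS]
lemma mem_RN (n n' : N) : n' ∈ L.RN n ↔ L.row n' = L.row n ∧ L.r n' ≤ L.r n := by
  simp [RN]
lemma mem_LN (n n' : N) : n' ∈ L.LN n ↔ L.row n' = L.row n ∧ L.r n' < L.r n := by
  simp [LN]
lemma mem_upS (C : Finset N) (s : S) : s ∈ L.upS C ↔ L.lo s ∈ C := by simp [upS]
lemma mem_dnS (C : Finset N) (s : S) : s ∈ L.dnS C ↔ L.hi s ∈ C := by simp [dnS]

lemma lo_le {s s' : S} (h : L.row (L.lo s) = L.row (L.lo s')) (hq : L.q s ≤ L.q s') :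
    L.r (L.lo s) ≤ L.r (L.lo s') := by
  rcases hq.lt_or_eq with h1 | h1
  · exact L.lo_mono _ _ h h1
  · rw [L.q_inj _ _ h h1]

lemma hi_le {s s' : S} (h : L.row (L.lo s) = L.row (L.lo s')) (hq : L.q s ≤ L.q s') :
    L.r (L.hi s) ≤ L.r (L.hi s') := by
  rcases hq.lt_or_eq with h1 | h1
  · exact L.hi_mono _ _ h h1
  · rw [L.q_inj _ _ h h1]

lemma lt_of_lo {s s' : S} (h : L.row (L.lo s) = L.row (L.lo s'))
    (hq : L.r (L.lo s) < L.r (L.lo s')) : L.q s < L.q s' := by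
  by_contra hc
  exact absurd (L.lo_le h.symm (not_lt.1 hc)) (not_le.2 hq)

lemma lt_of_hi {s s' : S} (h : L.row (L.lo s) = L.row (L.lo s'))
    (hq : L.r (L.hi s) < L.r (L.hi s')) : L.q s < L.q s' := by
  by_contra hc
  exact absurd (L.hi_le h.symm (not_lt.1 hc)) (not_le.2 hq)

lemma eq_of_lo {s s' : S} (hd : L.d (L.lo s)) (h : L.lo s = L.lo s') : s = s' := by
  rw [(L.up_iff _ hd s).1 rfl, (L.up_iff _ hd s').1 h.symm]

lemma eq_of_hi {s s' : S} (hd : L.d (L.hi s)) (h : L.hi s = L.hi s') : s = s' := by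
  rw [(L.dn_iff _ hd s).1 rfl, (L.dn_iff _ hd s').1 h.symm]

lemma lo_lt {s s' : S} (h : L.row (L.lo s) = L.row (L.lo s')) (hq : L.q s < L.q s')
    (hd : L.d (L.lo s) ∨ L.d (L.lo s') ∨ L.lo s ≠ L.lo s') : L.r (L.lo s) < L.r (L.lo s') := by
  refine lt_of_le_of_ne (L.lo_mono _ _ h hq) fun he => ?_
  have h1 := L.r_inj _ _ h he
  rcases hd with hd | hd | hd
  · rw [L.eq_of_lo hd h1] at hq; exact lt_irrefl _ hq
  · rw [L.eq_of_lo hd h1.symm] at hq; exact lt_irrefl _ hq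
  · exact hd h1

lemma row_hi_eq {s s' : S} : L.row (L.hi s) = L.row (L.hi s') ↔
    L.row (L.lo s) = L.row (L.lo s') := by
  rw [L.row_hi, L.row_hi]; omega

lemma hi_lt {s s' : S} (h : L.row (L.lo s) = L.row (L.lo s')) (hq : L.q s < L.q s')
    (hd : L.d (L.hi s) ∨ L.d (L.hi s') ∨ L.hi s ≠ L.hi s') : L.r (L.hi s) < L.r (L.hi s') := by
  refine lt_of_le_of_ne (L.hi_mono _ _ h hq) fun he => ?_
  have h1 := L.r_inj _ _ (L.row_hi_eq.2 h) he
  rcases hd with hd | hd | hd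
  · rw [L.eq_of_hi hd h1] at hq; exact lt_irrefl _ hq
  · rw [L.eq_of_hi hd h1.symm] at hq; exact lt_irrefl _ hq
  · exact hd h1

lemma isCut_RN (n : N) : L.IsCut (L.row n) (L.RN n) := by
  constructor
  · intro n' h; exact ((L.mem_RN _ _).1 h).1
  · intro n' h n'' h1 h2; rw [mem_RN] at *; exact ⟨h1, h2.trans h.2⟩

lemma isCut_LN (n : N) : L.IsCut (L.row n) (L.LN n) := by
  constructor
  · intro n' h; exact ((L.mem_LN _ _).1 h).1
  · intro n' h n'' h1 h2; rw [mem_LN] at *; exact ⟨h1, h2.trans_lt h.2⟩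

lemma isSCut_RS (s : S) : L.IsSCut (L.row (L.lo s)) (L.RS s) := by
  constructor
  · intro n' h; exact ((L.mem_RS _ _).1 h).1
  · intro n' h n'' h1 h2; rw [mem_RS] at *; exact ⟨h1, h2.trans h.2⟩

lemma isSCut_LS (s : S) : L.IsSCut (L.row (L.lo s)) (L.LS s) := by
  constructor
  · intro n' h; exact ((L.mem_LS _ _).1 h).1
  · intro n' h n'' h1 h2; rw [mem_LS] at *; exact ⟨h1, h2.trans_lt h.2⟩

lemma isSCut_upS {y : ℤ} {C : Finset N} (hC : L.IsCut y C) : L.IsSCut y (L.upS C) := by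
  constructor
  · intro s h; exact hC.1 _ ((L.mem_upS _ _).1 h)
  · intro s h s' h1 h2
    rw [mem_upS] at *
    exact hC.2 _ h _ h1 (L.lo_le (h1.trans (hC.1 _ h).symm) h2)

lemma isSCut_dnS {y : ℤ} {C : Finset N} (hC : L.IsCut y C) : L.IsSCut (y - 1) (L.dnS C) := by
  have key : ∀ s ∈ L.dnS C, L.row (L.lo s) = y - 1 := by
    intro s h
    have := hC.1 _ ((L.mem_dnS _ _).1 h)
    rw [L.row_hi] at this; omega
  constructor
  · exact key
  · intro s h s' h1 h2
    have h3 := key s h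
    rw [mem_dnS] at *
    exact hC.2 _ h _ (by rw [L.row_hi]; omega) (L.hi_le (h1.trans h3.symm) h2)

lemma exists_RS {y : ℤ} {U : Finset S} (hU : L.IsSCut y U) (hne : U.Nonempty) :
    ∃ s ∈ U, L.RS s = U := by
  obtain ⟨s, hs, hmax⟩ := Finset.exists_max_image U L.q hne
  refine ⟨s, hs, ?_⟩
  ext s'
  rw [mem_RS]
  constructor
  · rintro ⟨h1, h2⟩; exact hU.2 s hs s' (h1.trans (hU.1 s hs)) h2
  · intro h; exact ⟨(hU.1 _ h).trans (hU.1 _ hs).symm, hmax _ h⟩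

variable (m : N → ℝ)

/-- A strip cut carrying zero moment at both ends. -/
def ZS (U : Finset S) : Prop := ∑ s ∈ U, m (L.hi s) = 0 ∧ ∑ s ∈ U, m (L.lo s) = 0

variable {m}

section

lemma sum_hi
    (hm : ∀ n, ¬ L.d n → m n = 0)
    {C : Finset N} {U : Finset S} (h : ∀ s, L.d (L.hi s) → (s ∈ U ↔ L.hi s ∈ C)) :
    ∑ n ∈ C, m n = ∑ s ∈ U, m (L.hi s) := by
  have hd : ∀ n, m n ≠ 0 → L.d n := fun n h1 => by_contra fun h2 => h1 (hm n h2)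
  symm
  refine Finset.sum_bij_ne_zero (fun s _ _ => L.hi s) ?_ ?_ ?_ ?_
  · intro s h1 h2; exact (h s (hd _ h2)).1 h1
  · intro s h1 h2 s' _ _ he; exact L.eq_of_hi (hd _ h2) he
  · intro n h1 h2
    have e : L.hi (L.dn n) = n := (L.dn_iff n (hd _ h2) _).2 rfl
    refine ⟨L.dn n, (h _ (by rw [e]; exact hd _ h2)).2 (by rwa [e]), by rwa [e], e⟩
  · intros; rfl

lemma sum_lo
    (hm : ∀ n, ¬ L.d n → m n = 0)
    {C : Finset N} {U : Finset S} (h : ∀ s, L.d (L.lo s) → (s ∈ U ↔ L.lo s ∈ C)) :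
    ∑ n ∈ C, m n = ∑ s ∈ U, m (L.lo s) := by
  have hd : ∀ n, m n ≠ 0 → L.d n := fun n h1 => by_contra fun h2 => h1 (hm n h2)
  symm
  refine Finset.sum_bij_ne_zero (fun s _ _ => L.lo s) ?_ ?_ ?_ ?_
  · intro s h1 h2; exact (h s (hd _ h2)).1 h1
  · intro s h1 h2 s' _ _ he; exact L.eq_of_lo (hd _ h2) he
  · intro n h1 h2
    have e : L.lo (L.up n) = n := (L.up_iff n (hd _ h2) _).2 rfl
    refine ⟨L.up n, (h _ (by rw [e]; exact hd _ h2)).2 (by rwa [e]), by rwa [e], e⟩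
  · intros; rfl

lemma exists_cut_hi
    (hm : ∀ n, ¬ L.d n → m n = 0)
    {y : ℤ} {U : Finset S} (hU : L.IsSCut y U) :
    ∃ C, L.IsCut (y + 1) C ∧ ∑ n ∈ C, m n = ∑ s ∈ U, m (L.hi s) := by
  rcases U.eq_empty_or_nonempty with rfl | hne
  · exact ⟨∅, by simp [IsCut], by simp⟩
  obtain ⟨s, hs, rfl⟩ := L.exists_RS hU hne
  have hy := hU.1 s hs
  refine ⟨L.RN (L.hi s), ?_, L.sum_hi hm ?_⟩
  · have := L.isCut_RN (L.hi s); rwa [L.row_hi, hy] at this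
  · intro s' hd
    rw [mem_RS, mem_RN, L.row_hi_eq]
    refine and_congr_right fun h1 => ⟨fun h2 => L.hi_le h1 h2, fun h2 => ?_⟩
    by_contra h3
    exact absurd h2 (not_le.2 (L.hi_lt h1.symm (not_le.1 h3) (Or.inr (Or.inl hd))))

lemma exists_cut_lo
    (hm : ∀ n, ¬ L.d n → m n = 0)
    {y : ℤ} {U : Finset S} (hU : L.IsSCut y U) :
    ∃ C, L.IsCut y C ∧ ∑ n ∈ C, m n = ∑ s ∈ U, m (L.lo s) := by
  rcases U.eq_empty_or_nonempty with rfl | hne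
  · exact ⟨∅, by simp [IsCut], by simp⟩
  obtain ⟨s, hs, rfl⟩ := L.exists_RS hU hne
  have hy := hU.1 s hs
  refine ⟨L.RN (L.lo s), ?_, L.sum_lo hm ?_⟩
  · have := L.isCut_RN (L.lo s); rwa [hy] at this
  · intro s' hd
    rw [mem_RS, mem_RN]
    refine and_congr_right fun h1 => ⟨fun h2 => L.lo_le h1 h2, fun h2 => ?_⟩
    by_contra h3
    exact absurd h2 (not_le.2 (L.lo_lt h1.symm (not_le.1 h3) (Or.inr (Or.inl hd))))


/-- The maximum principle. -/
lemma M_nonpos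
    (hm : ∀ n, ¬ L.d n → m n = 0)
    (hconv : ∀ y C, L.IsCut y C →
      2 * ∑ n ∈ C, m n ≤ ∑ s ∈ L.upS C, m (L.hi s) + ∑ s ∈ L.dnS C, m (L.lo s))
    {y : ℤ} {C : Finset N} (hC : L.IsCut y C) : ∑ n ∈ C, m n ≤ 0 := by
  by_contra hpos
  push Not at hpos
  obtain ⟨C0, hC0, hmax⟩ := Finset.exists_max_image
    (Finset.univ.filter fun C : Finset N => ∃ y, L.IsCut y C) (fun C => ∑ n ∈ C, m n)
    ⟨C, by simpa using ⟨y, hC⟩⟩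
  have hmax' : ∀ y C, L.IsCut y C → ∑ n ∈ C, m n ≤ ∑ n ∈ C0, m n := fun y C h =>
    hmax C (by simpa using ⟨y, h⟩)
  obtain ⟨y0, hy0⟩ : ∃ y, L.IsCut y C0 := by simpa using hC0
  have hpos0 : 0 < ∑ n ∈ C0, m n := hpos.trans_le (hmax' y C hC)
  have key : ∀ k : ℕ, ∃ C, L.IsCut (y0 + k) C ∧ ∑ n ∈ C, m n = ∑ n ∈ C0, m n := by
    intro k
    induction k with
    | zero => exact ⟨C0, by simpa using hy0, rfl⟩
    | succ k ih =>
      obtain ⟨C1, hC1, h1⟩ := ih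
      obtain ⟨C2, hC2, h2⟩ := L.exists_cut_hi hm (L.isSCut_upS hC1)
      obtain ⟨C3, hC3, h3⟩ := L.exists_cut_lo hm (L.isSCut_dnS hC1)
      have h4 := hconv _ _ hC1
      have h5 := hmax' _ _ hC2
      have h6 := hmax' _ _ hC3
      refine ⟨C2, by push_cast; rwa [← add_assoc], by linarith⟩
  obtain ⟨B, hB⟩ := (Set.finite_range L.row).bddAbove
  obtain ⟨C1, hC1, h1⟩ := key (B - y0 + 1).toNat
  have : C1.Nonempty := by
    rw [Finset.nonempty_iff_ne_empty]; rintro rfl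
    simp at h1; linarith
  obtain ⟨n, hn⟩ := this
  have h2 := hC1.1 n hn
  have h3 : L.row n ≤ B := hB ⟨n, rfl⟩
  omega

lemma zero_up
    (hm : ∀ n, ¬ L.d n → m n = 0)
    (hconv : ∀ y C, L.IsCut y C →
      2 * ∑ n ∈ C, m n ≤ ∑ s ∈ L.upS C, m (L.hi s) + ∑ s ∈ L.dnS C, m (L.lo s))
    {y : ℤ} {C : Finset N} (hC : L.IsCut y C) (h0 : ∑ n ∈ C, m n = 0) :
    L.ZS m (L.upS C) ∧ L.ZS m (L.dnS C) := by
  obtain ⟨C2, hC2, h2⟩ := L.exists_cut_hi hm (L.isSCut_upS hC)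
  obtain ⟨C3, hC3, h3⟩ := L.exists_cut_lo hm (L.isSCut_dnS hC)
  have h4 := hconv _ _ hC
  have h5 := L.M_nonpos hm hconv hC2
  have h6 := L.M_nonpos hm hconv hC3
  refine ⟨⟨by linarith, ?_⟩, ⟨?_, by linarith⟩⟩
  · rw [← h0]; exact (L.sum_lo hm fun s _ => L.mem_upS _ _).symm
  · rw [← h0]; exact (L.sum_hi hm fun s _ => L.mem_dnS _ _).symm

lemma no_zero_between_aux {y : ℤ} {U : Finset S} (hU : L.IsSCut y U) {s s1 : S}
    (hrow : L.row (L.lo s) = L.row (L.lo s1)) (hs : s ∈ U) (hs1 : s1 ∉ U)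
    (hz : L.ZS m U) (hbt : ∀ s', L.row (L.lo s') = L.row (L.lo s) → L.q s ≤ L.q s' →
      L.q s' < L.q s1 → ¬ L.ZS m (L.RS s')) : False := by
  obtain ⟨s', hs', rfl⟩ := L.exists_RS hU ⟨s, hs⟩
  rw [mem_RS] at hs hs1
  refine hbt s' hs.1.symm hs.2 ?_ hz
  by_contra h
  exact hs1 ⟨hrow.symm.trans hs.1, not_lt.1 h⟩

lemma no_zero_between
    (hm : ∀ n, ¬ L.d n → m n = 0)
    (hconv : ∀ y C, L.IsCut y C →
      2 * ∑ n ∈ C, m n ≤ ∑ s ∈ L.upS C, m (L.hi s) + ∑ s ∈ L.dnS C, m (L.lo s))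
    {y : ℤ} {C : Finset N} (hC : L.IsCut y C) {s s1 : S}
    (hrow : L.row (L.lo s) = L.row (L.lo s1)) (hs : L.lo s ∈ C) (hs1 : L.lo s1 ∉ C)
    (hz : ∑ n ∈ C, m n = 0) (hbt : ∀ s', L.row (L.lo s') = L.row (L.lo s) → L.q s ≤ L.q s' →
      L.q s' < L.q s1 → ¬ L.ZS m (L.RS s')) : False :=
  L.no_zero_between_aux (L.isSCut_upS hC) hrow (by rwa [mem_upS]) (by rwa [mem_upS])
    (L.zero_up hm hconv hC hz).1 hbt

lemma sum_LN_lo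
    (hm : ∀ n, ¬ L.d n → m n = 0)
    (s : S) (hd : L.d (L.lo s)) :
    ∑ n ∈ L.LN (L.lo s), m n = ∑ s' ∈ L.LS s, m (L.lo s') := by
  refine L.sum_lo hm fun s' _ => ?_
  rw [mem_LS, mem_LN]
  exact and_congr_right fun h => ⟨fun h1 => L.lo_lt h h1 (Or.inr (Or.inl hd)), fun h1 => L.lt_of_lo h h1⟩

lemma sum_LN_hi
    (hm : ∀ n, ¬ L.d n → m n = 0)
    (s : S) (hd : L.d (L.hi s)) :
    ∑ n ∈ L.LN (L.hi s), m n = ∑ s' ∈ L.LS s, m (L.hi s') := by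
  refine L.sum_hi hm fun s' _ => ?_
  rw [mem_LS, mem_LN, L.row_hi_eq]
  exact and_congr_right fun h => ⟨fun h1 => L.hi_lt h h1 (Or.inr (Or.inl hd)), fun h1 => L.lt_of_hi h h1⟩

lemma sum_RN_lo
    (hm : ∀ n, ¬ L.d n → m n = 0)
    (s : S) :
    ∑ n ∈ L.RN (L.lo s), m n = ∑ s' ∈ L.RS s, m (L.lo s') := by
  refine L.sum_lo hm fun s' hd => ?_
  rw [mem_RS, mem_RN]
  refine and_congr_right fun h => ⟨fun h1 => L.lo_le h h1, fun h1 => ?_⟩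
  by_contra h3
  exact absurd h1 (not_le.2 (L.lo_lt h.symm (not_le.1 h3) (Or.inr (Or.inl hd))))

lemma sum_RN_hi
    (hm : ∀ n, ¬ L.d n → m n = 0)
    (s : S) :
    ∑ n ∈ L.RN (L.hi s), m n = ∑ s' ∈ L.RS s, m (L.hi s') := by
  refine L.sum_hi hm fun s' hd => ?_
  rw [mem_RS, mem_RN, L.row_hi_eq]
  refine and_congr_right fun h => ⟨fun h1 => L.hi_le h h1, fun h1 => ?_⟩
  by_contra h3
  exact absurd h1 (not_le.2 (L.hi_lt h.symm (not_le.1 h3) (Or.inr (Or.inl hd))))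

lemma dnS_LN (t : S) (hd : L.d (L.hi t)) : L.dnS (L.LN (L.hi t)) = L.LS t := by
  ext s'
  rw [mem_dnS, mem_LN, mem_LS, L.row_hi_eq]
  exact and_congr_right fun h => ⟨fun h1 => L.lt_of_hi h h1, fun h1 => L.hi_lt h h1 (Or.inr (Or.inl hd))⟩

lemma upS_LN (t : S) (hd : L.d (L.lo t)) : L.upS (L.LN (L.lo t)) = L.LS t := by
  ext s'
  rw [mem_upS, mem_LN, mem_LS]
  exact and_congr_right fun h => ⟨fun h1 => L.lt_of_lo h h1, fun h1 => L.lo_lt h h1 (Or.inr (Or.inl hd))⟩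

lemma dnS_RN (t : S) (hd : L.d (L.hi t)) : L.dnS (L.RN (L.hi t)) = L.RS t := by
  ext s'
  rw [mem_dnS, mem_RN, mem_RS, L.row_hi_eq]
  refine and_congr_right fun h => ⟨fun h1 => ?_, fun h1 => L.hi_le h h1⟩
  by_contra h3
  exact absurd h1 (not_le.2 (L.hi_lt h.symm (not_le.1 h3) (Or.inl hd)))

lemma descend
    (hm : ∀ n, ¬ L.d n → m n = 0)
    (hconv : ∀ y C, L.IsCut y C →
      2 * ∑ n ∈ C, m n ≤ ∑ s ∈ L.upS C, m (L.hi s) + ∑ s ∈ L.dnS C, m (L.lo s))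
    (B : ℤ) (hB : ∀ n, B ≤ L.row n) (k : ℕ) : ∀ s s1 : S, L.row (L.lo s) < B + k →
    L.row (L.lo s) = L.row (L.lo s1) → L.q s < L.q s1 → L.ZS m (L.LS s) → L.ZS m (L.RS s1) →
    (∀ s', L.row (L.lo s') = L.row (L.lo s) → L.q s ≤ L.q s' →
      L.q s' < L.q s1 → ¬ L.ZS m (L.RS s')) → (L.ed s).2 = (L.ed s1).2 → False := by
  induction k with
  | zero =>
    intro s s1 h
    have := hB (L.lo s)
    simp at h; omega
  | succ k ih =>
    intro s s1 hk hrow hq hl hr hbt hed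
    by_cases hd : L.d (L.lo s)
    · by_cases hd1 : L.d (L.lo s1)
      · have e : L.hi (L.dn (L.lo s)) = L.lo s := (L.dn_iff _ hd _).2 rfl
        have e1 : L.hi (L.dn (L.lo s1)) = L.lo s1 := (L.dn_iff _ hd1 _).2 rfl
        have eds : L.ed (L.dn (L.lo s)) = L.ed s := by
          rw [← L.ed_up _ hd, ← (L.up_iff _ hd s).1 rfl]
        have eds1 : L.ed (L.dn (L.lo s1)) = L.ed s1 := by
          rw [← L.ed_up _ hd1, ← (L.up_iff _ hd1 s1).1 rfl]
        generalize L.dn (L.lo s) = t at *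
        generalize L.dn (L.lo s1) = t1 at *
        have rt := L.row_hi t
        have rt1 := L.row_hi t1
        rw [e] at rt; rw [e1] at rt1
        have hrt : L.row (L.lo t) = L.row (L.lo t1) := by omega
        have hlt := L.lo_lt hrow hq (Or.inl hd)
        refine ih t t1 (by push_cast at hk; omega) hrt ?_ ?_ ?_ ?_ (by rw [eds, eds1, hed])
        · exact L.lt_of_hi hrt (by rwa [e, e1])
        · rw [← L.dnS_LN t (by rwa [e]), e]
          exact (L.zero_up hm hconv (L.isCut_LN _) (by rw [L.sum_LN_lo hm s hd]; exact hl.2)).2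
        · rw [← L.dnS_RN t1 (by rwa [e1]), e1]
          exact (L.zero_up hm hconv (L.isCut_RN _) (by rw [L.sum_RN_lo hm s1]; exact hr.2)).2
        · intro s' h1 h2 h3 hz
          refine L.no_zero_between hm hconv (L.isCut_RN (L.hi s')) hrow ?_ ?_
            (by rw [L.sum_RN_hi hm s']; exact hz.1) hbt
          · rw [← e, mem_RN, L.row_hi_eq]
            exact ⟨h1.symm, L.hi_le h1.symm h2⟩
          · rw [← e1, mem_RN]
            rintro ⟨_, h5⟩
            exact absurd h5 (not_le.2 (L.hi_lt (h1.trans hrt) h3 (Or.inr (Or.inl (by rwa [e1])))))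
      · -- `lo s1` is a vertex above the end of the left edge
        refine L.no_zero_between hm hconv (L.isCut_LN (L.lo s1)) hrow ?_ ?_ ?_ hbt
        · rw [mem_LN]; exact ⟨hrow, L.lo_lt hrow hq (Or.inl hd)⟩
        · rw [mem_LN]; simp
        · rw [← hr.2]
          refine L.sum_lo hm fun s' hd' => ?_
          rw [mem_RS, mem_LN]
          refine and_congr_right fun h => ⟨fun h1 => ?_, fun h1 => (L.lt_of_lo h h1).le⟩
          refine lt_of_le_of_ne (L.lo_le h h1) fun he => hd1 ?_
          rw [← L.r_inj _ _ h he]; exact hd'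
    · by_cases hne : L.lo s = L.lo s1
      · have h1 := L.ed_lo s hd
        have h2 := L.ed_lo s1 (hne ▸ hd)
        have h3 : s = s1 := L.ed_inj _ _ hrow (Prod.ext (by rw [h1, h2, hne]) hed)
        rw [h3] at hq; exact lt_irrefl _ hq
      · refine L.no_zero_between hm hconv (L.isCut_RN (L.lo s)) hrow ?_ ?_ ?_ hbt
        · rw [mem_RN]; simp
        · rw [mem_RN]; rintro ⟨_, h5⟩
          exact absurd h5 (not_le.2 (L.lo_lt hrow hq (Or.inr (Or.inr hne))))
        · rw [← hl.2]
          refine L.sum_lo hm fun s' hd' => ?_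
          rw [mem_LS, mem_RN]
          refine and_congr_right fun h => ⟨fun h1 => L.lo_le h h1.le, fun h1 => ?_⟩
          refine L.lt_of_lo h (lt_of_le_of_ne h1 fun he => hd ?_)
          rw [← L.r_inj _ _ h he]; exact hd'

lemma ascend
    (hm : ∀ n, ¬ L.d n → m n = 0)
    (hconv : ∀ y C, L.IsCut y C →
      2 * ∑ n ∈ C, m n ≤ ∑ s ∈ L.upS C, m (L.hi s) + ∑ s ∈ L.dnS C, m (L.lo s))
    (B : ℤ) (hB : ∀ n, L.row n ≤ B) (k : ℕ) : ∀ s : S, B < L.row (L.lo s) + k →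
    L.ZS m (L.LS s) → ¬ L.ZS m (L.RS s) → False := by
  induction k with
  | zero =>
    intro s h
    have := hB (L.lo s)
    simp at h; omega
  | succ k ih =>
    intro s hk hl hr
    by_cases hd : L.d (L.hi s)
    · have e : L.lo (L.up (L.hi s)) = L.hi s := (L.up_iff _ hd _).2 rfl
      generalize L.up (L.hi s) = t at *
      have rt := L.row_hi s
      rw [← e] at rt
      refine ih t (by push_cast at hk; omega) ?_ ?_
      · rw [← L.upS_LN t (by rwa [e]), e]
        exact (L.zero_up hm hconv (L.isCut_LN _) (by rw [L.sum_LN_hi hm s hd]; exact hl.1)).1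
      · intro hz
        apply hr
        rw [← L.dnS_RN s hd, ← e]
        exact (L.zero_up hm hconv (L.isCut_RN _) (by rw [L.sum_RN_lo hm t]; exact hz.2)).2
    · have hM : ∑ n ∈ L.RN (L.hi s), m n = 0 := by
        rw [← hl.1]
        refine L.sum_hi hm fun s' hd' => ?_
        rw [mem_LS, mem_RN, L.row_hi_eq]
        refine and_congr_right fun h => ⟨fun h1 => L.hi_le h h1.le, fun h1 => ?_⟩
        refine L.lt_of_hi h (lt_of_le_of_ne h1 fun he => hd ?_)
        rw [← L.r_inj _ _ (L.row_hi_eq.2 h) he]; exact hd'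
      have hz := (L.zero_up hm hconv (L.isCut_RN _) hM).2
      obtain ⟨s2, hs2, hs2e⟩ := L.exists_RS (L.isSCut_dnS (L.isCut_RN (L.hi s)))
        ⟨s, by rw [mem_dnS, mem_RN]; simp⟩
      rw [← hs2e] at hz
      have hs_mem : s ∈ L.RS s2 := by rw [hs2e, mem_dnS, mem_RN]; simp
      rw [mem_RS] at hs_mem
      rw [mem_dnS, mem_RN, L.row_hi_eq] at hs2
      have hlt : L.q s < L.q s2 := by
        refine lt_of_le_of_ne hs_mem.2 fun he => hr ?_
        rwa [L.q_inj _ _ hs_mem.1 he]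
      obtain ⟨s1, hs1, hmin⟩ := Finset.exists_min_image
        (Finset.univ.filter fun s' => L.row (L.lo s') = L.row (L.lo s) ∧ L.q s < L.q s' ∧
          L.ZS m (L.RS s')) L.q ⟨s2, by simp [hz, hlt, hs2.1]⟩
      simp only [Finset.mem_filter, Finset.mem_univ, true_and] at hs1 hmin
      obtain ⟨a1, a2, a3⟩ := hs1
      have hhi : L.hi s = L.hi s1 := by
        refine L.r_inj _ _ (L.row_hi_eq.2 a1.symm) (le_antisymm (L.hi_le a1.symm a2.le) ?_)
        exact (L.hi_le (a1.trans hs_mem.1) (hmin s2 ⟨hs2.1, hlt, hz⟩)).trans hs2.2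
      obtain ⟨B', hB'⟩ := (Set.finite_range L.row).bddBelow
      refine L.descend hm hconv B' (fun n => hB' ⟨n, rfl⟩) (L.row (L.lo s) - B' + 1).toNat
        s s1 (by have := hB' ⟨L.lo s, rfl⟩; omega) a1.symm a2 hl a3 ?_ ?_
      · intro s' h1 h2 h3 h4
        rcases h2.lt_or_eq with h5 | h5
        · exact absurd (hmin s' ⟨h1, h5, h4⟩) (not_le.2 h3)
        · rw [← L.q_inj _ _ h1.symm h5] at h4; exact hr h4
      · rw [L.ed_hi s hd, L.ed_hi s1 (hhi ▸ hd), hhi]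

/-- All moments sums over cuts vanish. -/
theorem M_zero
    (hm : ∀ n, ¬ L.d n → m n = 0)
    (hconv : ∀ y C, L.IsCut y C →
      2 * ∑ n ∈ C, m n ≤ ∑ s ∈ L.upS C, m (L.hi s) + ∑ s ∈ L.dnS C, m (L.lo s))
    {y : ℤ} {C : Finset N} (hC : L.IsCut y C) : ∑ n ∈ C, m n = 0 := by
  by_contra hne
  have h1 : ¬ L.ZS m (L.upS C) := fun h => hne (by
    rw [← h.2]; exact L.sum_lo hm fun s _ => (L.mem_upS _ _))
  have h2 : (L.upS C).Nonempty := by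
    rw [Finset.nonempty_iff_ne_empty]; intro h; rw [h] at h1; exact h1 (by simp [ZS])
  obtain ⟨s0, hs0, hs0e⟩ := L.exists_RS (L.isSCut_upS hC) h2
  rw [← hs0e] at h1
  obtain ⟨s, hs, hmin⟩ := Finset.exists_min_image
    (Finset.univ.filter fun s' => L.row (L.lo s') = L.row (L.lo s0) ∧ ¬ L.ZS m (L.RS s')) L.q
    ⟨s0, by simp [h1]⟩
  simp only [Finset.mem_filter, Finset.mem_univ, true_and] at hs hmin
  obtain ⟨B, hB⟩ := (Set.finite_range L.row).bddAbove
  refine L.ascend hm hconv B (fun n => hB ⟨n, rfl⟩) (B - L.row (L.lo s) + 1).toNat s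
    (by have := hB ⟨L.lo s, rfl⟩; omega) ?_ hs.2
  rcases (L.LS s).eq_empty_or_nonempty with h | h
  · rw [h]; simp [ZS]
  · obtain ⟨s', hs', he⟩ := L.exists_RS (L.isSCut_LS s) h
    rw [← he]
    by_contra hc
    rw [mem_LS] at hs'
    exact absurd (hmin s' ⟨hs'.1.trans hs.1, hc⟩) (not_le.2 hs'.2)

end

end LevelGraph

/-! ### Linear programming duality -/

/-- Gordan's alternative. -/
lemma gordan_alternative {E ι : Type*} [AddCommGroup E] [Module ℝ E] [Fintype ι]
    (Φ : E →ₗ[ℝ] (ι → ℝ)) (h : ¬ ∃ x, ∀ i, 0 < Φ x i) :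
    ∃ c : ι → ℝ, (∀ i, 0 ≤ c i) ∧ (∃ i, 0 < c i) ∧ ∀ x, ∑ i, c i * Φ x i = 0 := by
  classical
  have hconv : Convex ℝ {w : ι → ℝ | ∀ i, 0 < w i} := by
    intro x hx y hy a b ha hb hab i
    have h1 := hx i
    have h2 := hy i
    simp only [Pi.add_apply, Pi.smul_apply, smul_eq_mul]
    rcases ha.lt_or_eq with h3 | h3
    · have := mul_pos h3 h1
      have := mul_nonneg hb h2.le
      linarith
    · subst h3
      have : b = 1 := by linarith
      subst this; linarith
  have hopen : IsOpen {w : ι → ℝ | ∀ i, 0 < w i} := by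
    rw [Set.ofPred_forall]
    exact isOpen_iInter_of_finite fun i => isOpen_lt continuous_const (continuous_apply i)
  obtain ⟨f, u, hf, hu⟩ := geometric_hahn_banach_open hconv hopen
    (LinearMap.range Φ).convex (by
      rw [Set.disjoint_left]
      rintro w hw ⟨x, rfl⟩
      exact h ⟨x, hw⟩)
  have hu0 : u ≤ 0 := by simpa using hu 0 (zero_mem _)
  have hW : ∀ x, f (Φ x) = 0 := by
    intro x
    by_contra hne
    have h1 := hu (Φ (((u - 1) / f (Φ x)) • x)) ⟨_, rfl⟩
    rw [map_smul, map_smul, smul_eq_mul, div_mul_cancel₀ _ hne] at h1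
    linarith
  have hone : f 1 < 0 := (hf 1 (by intro i; simp)).trans_le hu0
  have hsum : ∀ w, f w = ∑ i, w i * f (Pi.single i 1) := by
    intro w
    conv_lhs => rw [pi_eq_sum_univ' w]
    rw [map_sum]
    refine Finset.sum_congr rfl fun i _ => ?_
    rw [map_smul, smul_eq_mul]
  have hle : ∀ i, f (Pi.single i 1) ≤ 0 := by
    intro i
    by_contra hc
    push Not at hc
    have he : 0 < f (Pi.single i 1) / (- f 1) := div_pos hc (by linarith)
    have h1 := hf (Pi.single i 1 + (f (Pi.single i 1) / (- f 1)) • 1) (by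
      intro j
      have : (0:ℝ) ≤ (Pi.single i 1 : ι → ℝ) j := by
        rw [Pi.single_apply]; split_ifs <;> norm_num
      simp only [Pi.add_apply, Pi.smul_apply, Pi.one_apply, smul_eq_mul, mul_one]
      linarith)
    rw [map_add, map_smul, smul_eq_mul] at h1
    have h2 : f (Pi.single i 1) / (- f 1) * f 1 = - f (Pi.single i 1) := by
      have : f 1 ≠ 0 := hone.ne
      rw [div_neg, neg_mul, div_mul_cancel₀ _ this]
    linarith
  refine ⟨fun i => - f (Pi.single i 1), fun i => by have := hle i; simpa using this, ?_, ?_⟩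
  · by_contra hc
    push Not at hc
    have h1 := hsum 1
    have h2 : ∑ i, (1 : ι → ℝ) i * f (Pi.single i 1) = 0 :=
      Finset.sum_eq_zero fun i _ => by
        have := hc i; have := hle i
        simp only [Pi.one_apply, one_mul]; linarith
    linarith
  · intro x
    have h1 := hsum (Φ x)
    rw [hW] at h1
    calc _ = - ∑ i, Φ x i * f (Pi.single i 1) := by
          rw [← Finset.sum_neg_distrib]; exact Finset.sum_congr rfl fun i _ => by ring
      _ = 0 := by rw [← h1]; simp

namespace LevelGraph

open scoped Classical

variable {N S : Type} [Fintype N] [Fintype S] (L : LevelGraph N S)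

/-- The linear functional expressing straightness at a dummy node. -/
noncomputable def bendAt (n : N) : (N → ℝ) →ₗ[ℝ] ℝ :=
  if L.d n then
    LinearMap.proj (R := ℝ) (φ := fun _ : N => ℝ) (L.hi (L.up n))
      + LinearMap.proj (R := ℝ) (φ := fun _ : N => ℝ) (L.lo (L.dn n))
      - (2 : ℝ) • LinearMap.proj (R := ℝ) (φ := fun _ : N => ℝ) n
  else 0

/-- Every properly levelled plane graph has a straight realisation. -/
theorem exists_straight : ∃ Z : N → ℝ,
    (∀ n, L.d n → Z (L.hi (L.up n)) + Z (L.lo (L.dn n)) = 2 * Z n) ∧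
    ∀ n n', L.row n = L.row n' → L.r n < L.r n' → Z n < Z n' := by
  by_contra hcon
  let ι := {p : N × N // L.row p.1 = L.row p.2 ∧ L.r p.1 < L.r p.2}
  let φ : ι → (N → ℝ) →ₗ[ℝ] ℝ := fun p =>
    LinearMap.proj (R := ℝ) (φ := fun _ : N => ℝ) p.1.2
      - LinearMap.proj (R := ℝ) (φ := fun _ : N => ℝ) p.1.1
  have hφ : ∀ p Z, φ p Z = Z p.1.2 - Z p.1.1 := fun p Z => rfl
  let K : Submodule ℝ (N → ℝ) := ⨅ n, (L.bendAt n).ker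
  obtain ⟨c, hc0, ⟨p0, hp0⟩, hc⟩ := gordan_alternative ((LinearMap.pi φ).comp K.subtype) (by
    rintro ⟨⟨Z, hZ⟩, hpos⟩
    refine hcon ⟨Z, fun n hn => ?_, fun n n' h1 h2 => ?_⟩
    · have h1 : L.bendAt n Z = 0 := by
        have := (Submodule.mem_iInf _).1 hZ n
        simpa using this
      simp [bendAt, hn] at h1
      linarith
    · have := hpos ⟨(n, n'), h1, h2⟩
      simp [hφ] at this
      exact this)
  have hmem : (∑ p, c p • φ p) ∈ Submodule.span ℝ (Set.range L.bendAt) := by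
    apply mem_span_of_iInf_ker_le_ker
    intro Z hZ
    have := hc ⟨Z, hZ⟩
    simpa using this
  obtain ⟨μ, hμ⟩ := (Submodule.mem_span_range_iff_exists_fun ℝ).1 hmem
  let m : N → ℝ := fun n => if L.d n then - μ n else 0
  have hm : ∀ n, ¬ L.d n → m n = 0 := fun n h => by simp [m, h]
  let ind : Finset N → N → ℝ := fun C n => if n ∈ C then 1 else 0
  have hF : ∀ C : Finset N, ∑ p, c p * (ind C p.1.2 - ind C p.1.1) =
      2 * ∑ n ∈ C, m n - ∑ s ∈ L.upS C, m (L.hi s) - ∑ s ∈ L.dnS C, m (L.lo s) := by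
    intro C
    have h1 := congrArg (fun F => F (ind C)) hμ
    simp only [LinearMap.sum_apply, LinearMap.smul_apply, smul_eq_mul, hφ] at h1
    rw [← h1]
    have e1 : ∑ s ∈ L.upS C, m (L.hi s) = ∑ n, m n * ind C (L.lo (L.dn n)) := by
      rw [← L.sum_hi (C := Finset.univ.filter fun n => L.lo (L.dn n) ∈ C) hm]
      · rw [Finset.sum_filter]; exact Finset.sum_congr rfl fun n _ => by simp [ind]
      · intro s hd
        have h := (L.dn_iff _ hd s).1 rfl
        rw [mem_upS, Finset.mem_filter, ← h]; simp
    have e2 : ∑ s ∈ L.dnS C, m (L.lo s) = ∑ n, m n * ind C (L.hi (L.up n)) := by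
      rw [← L.sum_lo (C := Finset.univ.filter fun n => L.hi (L.up n) ∈ C) hm]
      · rw [Finset.sum_filter]; exact Finset.sum_congr rfl fun n _ => by simp [ind]
      · intro s hd
        have h := (L.up_iff _ hd s).1 rfl
        rw [mem_dnS, Finset.mem_filter, ← h]; simp
    have e3 : ∑ n ∈ C, m n = ∑ n, m n * ind C n := by
      simp [ind, Finset.sum_ite_mem]
    rw [e1, e2, e3, Finset.mul_sum, ← Finset.sum_sub_distrib, ← Finset.sum_sub_distrib]
    refine Finset.sum_congr rfl fun n _ => ?_
    by_cases hd : L.d n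
    · simp [bendAt, m, hd]; ring
    · simp [bendAt, m, hd]
  have hterm : ∀ y C, L.IsCut y C → ∀ p : ι, c p * (ind C p.1.2 - ind C p.1.1) ≤ 0 := by
    intro y C hC p
    refine mul_nonpos_of_nonneg_of_nonpos (hc0 p) ?_
    by_cases h2 : p.1.2 ∈ C
    · have h1 : p.1.1 ∈ C := hC.2 _ h2 _ (p.2.1.trans (hC.1 _ h2)) p.2.2.le
      simp [ind, h1, h2]
    · by_cases h1 : p.1.1 ∈ C <;> simp [ind, h1, h2]
  have hconv : ∀ y C, L.IsCut y C →
      2 * ∑ n ∈ C, m n ≤ ∑ s ∈ L.upS C, m (L.hi s) + ∑ s ∈ L.dnS C, m (L.lo s) := by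
    intro y C hC
    have h1 := hF C
    have h2 : ∑ p, c p * (ind C p.1.2 - ind C p.1.1) ≤ 0 :=
      Finset.sum_nonpos fun p _ => hterm y C hC p
    linarith
  have hC := L.isCut_RN p0.1.1
  have h0 := L.M_zero hm hconv hC
  obtain ⟨h1, h2⟩ := L.zero_up hm hconv hC h0
  have h3 := hF (L.RN p0.1.1)
  rw [h0, h1.1, h2.2] at h3
  have h4 : ∑ p, c p * (ind (L.RN p0.1.1) p.1.2 - ind (L.RN p0.1.1) p.1.1) < 0 := by
    refine Finset.sum_neg' (fun p _ => hterm _ _ hC p) ⟨p0, Finset.mem_univ _, ?_⟩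
    have a1 : p0.1.1 ∈ L.RN p0.1.1 := by rw [mem_RN]; simp
    have a2 : p0.1.2 ∉ L.RN p0.1.1 := by
      rw [mem_RN]; rintro ⟨_, h⟩; exact absurd p0.2.2 (not_lt.2 h)
    simp only [ind, a1, a2, if_true, if_false]
    linarith
  linarith

end LevelGraph

/-! ### From drawings with given orders to integer coordinates -/

lemma exists_int_solution {V ι : Type*} [Fintype V] [Finite ι] (φ : ι → (V → ℝ) →ₗ[ℝ] ℝ)
    (x : V → ℝ) (hx : ∀ i, 0 < φ i x) : ∃ z : V → ℤ, ∀ i, 0 < φ i (fun v => (z v : ℝ)) := by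
  have hdense : DenseRange (Pi.map (fun _ : V => ((↑) : ℚ → ℝ))) :=
    DenseRange.piMap fun _ => Rat.denseRange_cast
  have hopen : IsOpen {w : V → ℝ | ∀ i, 0 < φ i w} := by
    rw [Set.ofPred_forall]
    exact isOpen_iInter_of_finite fun i =>
      isOpen_lt continuous_const (φ i).continuous_of_finiteDimensional
  obtain ⟨q, hq⟩ := hdense.exists_mem_open hopen ⟨x, hx⟩
  let k : ℕ := ∏ v, (q v).den
  have hk : 0 < k := Finset.prod_pos fun v _ => (q v).den_pos
  have hz : ∀ v, ∃ z : ℤ, (z : ℝ) = (k : ℝ) * (q v : ℝ) := by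
    intro v
    obtain ⟨c, hc⟩ : (q v).den ∣ k := Finset.dvd_prod_of_mem _ (Finset.mem_univ v)
    refine ⟨c * (q v).num, ?_⟩
    rw [hc]
    have h1 : (q v : ℝ) * ((q v).den : ℝ) = (q v).num := by exact_mod_cast Rat.mul_den_eq_num (q v)
    push_cast
    rw [← h1]; ring
  choose z hz using hz
  refine ⟨z, fun i => ?_⟩
  have : (fun v => (z v : ℝ)) = (k : ℝ) • (Pi.map (fun _ : V => ((↑) : ℚ → ℝ)) q) := by
    ext v; simp [hz]
  rw [this, map_smul, smul_eq_mul]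
  exact mul_pos (by exact_mod_cast hk) (hq i)

lemma discrete_linear (f : ℤ → ℝ) (a b : ℤ) (hab : a < b)
    (h : ∀ y, a < y → y < b → f (y + 1) + f (y - 1) = 2 * f y) (y : ℤ) (h1 : a ≤ y) (h2 : y ≤ b) :
    f y = f a + ((y : ℝ) - a) / ((b : ℝ) - a) * (f b - f a) := by
  have key : ∀ y, a ≤ y → y < b →
      f y = f a + ((y : ℝ) - a) * (f (a + 1) - f a) ∧
      f (y + 1) = f a + ((y : ℝ) + 1 - a) * (f (a + 1) - f a) := by
    intro y hy
    induction y, hy using Int.le_induction with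
    | base => intro _; constructor <;> ring
    | succ y hy ih =>
      intro hlt
      obtain ⟨i1, i2⟩ := ih (by omega)
      have := h (y + 1) (by omega) hlt
      rw [show y + 1 - 1 = y by ring] at this
      push_cast
      constructor
      · exact i2
      · linarith
  have hb := (key (b - 1) (by omega) (by omega)).2
  rw [show b - 1 + 1 = b by ring] at hb
  push_cast at hb
  have hne : (b : ℝ) - a ≠ 0 := by
    have : (a : ℝ) < b := by exact_mod_cast hab
    intro h; linarith
  have hy : f y = f a + ((y : ℝ) - a) * (f (a + 1) - f a) := by
    rcases h2.lt_or_eq with h3 | h3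
    · exact (key y h1 h3).1
    · subst h3; rw [hb]; ring
  rw [hy, hb]
  field_simp
  ring

section Realize

variable {V : Type} (Y : V → ℤ) (E : V → V → Prop)

/-- dummy nodes -/
abbrev DumT : Type := {p : (V × V) × ℤ // E p.1.1 p.1.2 ∧ Y p.1.1 < p.2 ∧ p.2 < Y p.1.2}

/-- strip edges -/
abbrev StripT : Type := {p : (V × V) × ℤ // E p.1.1 p.1.2 ∧ Y p.1.1 ≤ p.2 ∧ p.2 < Y p.1.2}

open scoped Classical in
/-- the node of edge `ab` in row `y` -/
noncomputable def nodeAt (a b : V) (y : ℤ) : V ⊕ DumT Y E :=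
  if h : E a b ∧ Y a < y ∧ y < Y b then Sum.inr ⟨((a, b), y), h⟩
  else if y ≤ Y a then Sum.inl a else Sum.inl b

/-- the position of the edge `ab` in row `y` -/
noncomputable def posAt (xv : V → ℝ) (X : V → V → ℤ → ℝ) (a b : V) (y : ℤ) : ℝ :=
  if y ≤ Y a then xv a else if Y b ≤ y then xv b else X a b y

/-- the row of a node -/
def rowOf : V ⊕ DumT Y E → ℤ
  | Sum.inl v => Y v
  | Sum.inr p => p.1.2

/-- the position of a node -/
def rOf (xv : V → ℝ) (X : V → V → ℤ → ℝ) : V ⊕ DumT Y E → ℝ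
  | Sum.inl v => xv v
  | Sum.inr p => X p.1.1.1 p.1.1.2 p.1.2

variable {Y E}

lemma nodeAt_mid {a b : V} {y : ℤ} (h : E a b ∧ Y a < y ∧ y < Y b) :
    nodeAt Y E a b y = Sum.inr ⟨((a, b), y), h⟩ := by
  simp only [nodeAt]; rw [dif_pos h]

lemma nodeAt_lo {a b : V} {y : ℤ} (h : y ≤ Y a) : nodeAt Y E a b y = Sum.inl a := by
  simp only [nodeAt]; rw [dif_neg (fun h' => by omega), if_pos h]

lemma nodeAt_hi {a b : V} {y : ℤ} (h1 : Y a < y) (h : Y b ≤ y) : nodeAt Y E a b y = Sum.inl b := by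
  simp only [nodeAt]; rw [dif_neg (fun h' => by omega), if_neg (by omega)]

lemma rowOf_nodeAt {a b : V} {y : ℤ} (hE : E a b) (h1 : Y a ≤ y) (h2 : y ≤ Y b) :
    rowOf Y E (nodeAt Y E a b y) = y := by
  rcases h1.lt_or_eq with h1 | h1
  · rcases h2.lt_or_eq with h2 | h2
    · rw [nodeAt_mid ⟨hE, h1, h2⟩]; rfl
    · rw [nodeAt_hi h1 h2.ge]; exact h2.symm
  · rw [nodeAt_lo h1.ge]; exact h1

lemma rOf_nodeAt (xv : V → ℝ) (X : V → V → ℤ → ℝ) {a b : V} {y : ℤ} (hE : E a b) :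
    rOf Y E xv X (nodeAt Y E a b y) = posAt Y xv X a b y := by
  unfold posAt
  split_ifs with h1 h2
  · rw [nodeAt_lo h1]; rfl
  · rw [nodeAt_hi (by omega) h2]; rfl
  · rw [nodeAt_mid ⟨hE, by omega, by omega⟩]; rfl

lemma nodeAt_eq_inr {a b : V} {y : ℤ} {p : DumT Y E} (h : nodeAt Y E a b y = Sum.inr p) :
    p.1 = ((a, b), y) := by
  by_cases h1 : E a b ∧ Y a < y ∧ y < Y b
  · rw [nodeAt_mid h1] at h
    rw [← Sum.inr.inj h]
  · simp only [nodeAt] at h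
    rw [dif_neg h1] at h
    split_ifs at h

variable [Finite V]

lemma level_realize_real (hE : ∀ a b, E a b → Y a < Y b) (xv : V → ℝ) (X Q : V → V → ℤ → ℝ)
    (h1 : ∀ a b, Y a = Y b → xv a = xv b → a = b)
    (h2 : ∀ v a b, E a b → Y a < Y v → Y v < Y b → xv v ≠ X a b (Y v))
    (h3 : ∀ a b c d y, E a b → E c d → Y a < y → y < Y b → Y c < y → y < Y d →
      X a b y = X c d y → a = c ∧ b = d)
    (h4 : ∀ a b c d y, E a b → E c d → Y a ≤ y → y < Y b → Y c ≤ y → y < Y d →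
      Q a b y = Q c d y → a = c ∧ b = d)
    (h5 : ∀ a b c d y, E a b → E c d → Y a ≤ y → y < Y b → Y c ≤ y → y < Y d →
      Q a b y < Q c d y → posAt Y xv X a b y ≤ posAt Y xv X c d y ∧
        posAt Y xv X a b (y + 1) ≤ posAt Y xv X c d (y + 1)) :
    ∃ Z : V ⊕ DumT Y E → ℝ, (∀ a b y, E a b → Y a < y → y < Y b →
      Z (nodeAt Y E a b (y + 1)) + Z (nodeAt Y E a b (y - 1)) = 2 * Z (nodeAt Y E a b y)) ∧
      ∀ n n', rowOf Y E n = rowOf Y E n' → rOf Y E xv X n < rOf Y E xv X n' → Z n < Z n' := by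
  classical
  by_cases hS : Nonempty (StripT Y E)
  swap
  · exact ⟨rOf Y E xv X, fun a b y h a1 a2 => absurd ⟨⟨((a, b), y), h, a1.le, a2⟩⟩ hS,
      fun n n' _ h => h⟩
  obtain ⟨s0⟩ := hS
  haveI := Fintype.ofFinite V
  obtain ⟨A, hA⟩ := (Set.finite_range Y).bddBelow
  obtain ⟨B, hB⟩ := (Set.finite_range Y).bddAbove
  have hA' : ∀ v, A ≤ Y v := fun v => hA ⟨v, rfl⟩
  have hB' : ∀ v, Y v ≤ B := fun v => hB ⟨v, rfl⟩
  haveI : Fintype (StripT Y E) := Set.Finite.fintype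
    (((Set.finite_univ (α := V × V)).prod (Set.finite_Icc A B)).subset (by
      rintro ⟨⟨a, b⟩, y⟩ ⟨_, a1, a2⟩
      exact ⟨trivial, (hA' a).trans a1, a2.le.trans (hB' b)⟩))
  haveI : Fintype (DumT Y E) := Set.Finite.fintype
    (((Set.finite_univ (α := V × V)).prod (Set.finite_Icc A B)).subset (by
      rintro ⟨⟨a, b⟩, y⟩ ⟨_, a1, a2⟩
      exact ⟨trivial, (hA' a).trans a1.le, a2.le.trans (hB' b)⟩))
  have rlo : ∀ s : StripT Y E, rowOf Y E (nodeAt Y E s.1.1.1 s.1.1.2 s.1.2) = s.1.2 := fun s =>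
    rowOf_nodeAt s.2.1 s.2.2.1 s.2.2.2.le
  have rhi : ∀ s : StripT Y E, rowOf Y E (nodeAt Y E s.1.1.1 s.1.1.2 (s.1.2 + 1)) = s.1.2 + 1 :=
    fun s => rowOf_nodeAt s.2.1 (by have := s.2.2.1; omega) s.2.2.2
  let L : LevelGraph (V ⊕ DumT Y E) (StripT Y E) :=
    { row := rowOf Y E
      r := rOf Y E xv X
      lo := fun s => nodeAt Y E s.1.1.1 s.1.1.2 s.1.2
      hi := fun s => nodeAt Y E s.1.1.1 s.1.1.2 (s.1.2 + 1)
      q := fun s => Q s.1.1.1 s.1.1.2 s.1.2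
      d := fun n => ∃ p, n = Sum.inr p
      up := fun n => Sum.elim (fun _ => s0) (fun p => ⟨p.1, p.2.1, p.2.2.1.le, p.2.2.2⟩) n
      dn := fun n => Sum.elim (fun _ => s0)
        (fun p => ⟨(p.1.1, p.1.2 - 1), p.2.1, by have := p.2.2.1; show Y p.1.1.1 ≤ p.1.2 - 1; omega,
          by have := p.2.2.2; show p.1.2 - 1 < Y p.1.1.2; omega⟩) n
      ed := fun s => (Sum.inl s.1.1.1, Sum.inl s.1.1.2)
      r_inj := by
        rintro (v | ⟨⟨⟨a, b⟩, y⟩, e1, e2, e3⟩) (w | ⟨⟨⟨c, d⟩, z⟩, f1, f2, f3⟩) hr he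
        · rw [h1 v w hr he]
        · simp only [rowOf, rOf] at hr he f1 f2 f3
          subst hr
          exact absurd he (h2 v c d f1 f2 f3)
        · simp only [rowOf, rOf] at hr he e1 e2 e3
          subst hr
          exact absurd he.symm (h2 w a b e1 e2 e3)
        · simp only [rowOf, rOf] at hr he e1 e2 e3 f1 f2 f3
          subst hr
          obtain ⟨rfl, rfl⟩ := h3 a b c d y e1 f1 e2 e3 f2 f3 he
          rfl
      row_hi := fun s => by rw [rlo, rhi]
      q_inj := by
        intro s s' hr he
        rw [rlo, rlo] at hr
        obtain ⟨⟨⟨a, b⟩, y⟩, e1, e2, e3⟩ := s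
        obtain ⟨⟨⟨c, d⟩, z⟩, f1, f2, f3⟩ := s'
        simp only at hr he e1 e2 e3 f1 f2 f3
        subst hr
        obtain ⟨rfl, rfl⟩ := h4 a b c d y e1 f1 e2 e3 f2 f3 he
        rfl
      lo_mono := by
        intro s s' hr he
        rw [rlo, rlo] at hr
        obtain ⟨⟨⟨a, b⟩, y⟩, e1, e2, e3⟩ := s
        obtain ⟨⟨⟨c, d⟩, z⟩, f1, f2, f3⟩ := s'
        simp only at hr he e1 e2 e3 f1 f2 f3 ⊢
        subst hr
        rw [rOf_nodeAt _ _ e1, rOf_nodeAt _ _ f1]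
        exact (h5 a b c d y e1 f1 e2 e3 f2 f3 he).1
      hi_mono := by
        intro s s' hr he
        rw [rlo, rlo] at hr
        obtain ⟨⟨⟨a, b⟩, y⟩, e1, e2, e3⟩ := s
        obtain ⟨⟨⟨c, d⟩, z⟩, f1, f2, f3⟩ := s'
        simp only at hr he e1 e2 e3 f1 f2 f3 ⊢
        subst hr
        rw [rOf_nodeAt _ _ e1, rOf_nodeAt _ _ f1]
        exact (h5 a b c d y e1 f1 e2 e3 f2 f3 he).2
      up_iff := by
        rintro _ ⟨p, rfl⟩ s
        constructor
        · intro h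
          exact Subtype.ext (nodeAt_eq_inr h).symm
        · rintro rfl
          exact nodeAt_mid p.2
      dn_iff := by
        rintro _ ⟨p, rfl⟩ s
        constructor
        · intro h
          have := nodeAt_eq_inr h
          apply Subtype.ext
          simp only [Sum.elim_inr]
          rw [this]
          simp
        · rintro rfl
          simp only [Sum.elim_inr, sub_add_cancel]
          exact nodeAt_mid p.2
      ed_lo := by
        rintro ⟨⟨⟨a, b⟩, y⟩, e1, e2, e3⟩ hd
        simp only at e1 e2 e3 hd ⊢
        rcases e2.lt_or_eq with e2 | e2
        · exact absurd ⟨_, nodeAt_mid ⟨e1, e2, e3⟩⟩ hd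
        · rw [nodeAt_lo e2.ge]
      ed_hi := by
        rintro ⟨⟨⟨a, b⟩, y⟩, e1, e2, e3⟩ hd
        simp only at e1 e2 e3 hd ⊢
        by_cases e4 : y + 1 < Y b
        · exact absurd ⟨_, nodeAt_mid ⟨e1, by omega, e4⟩⟩ hd
        · rw [nodeAt_hi (by omega) (by omega)]
      ed_up := by
        rintro _ ⟨p, rfl⟩
        rfl
      ed_inj := by
        intro s s' hr he
        rw [rlo, rlo] at hr
        simp only [Prod.mk.injEq, Sum.inl.injEq] at he
        exact Subtype.ext (Prod.ext (Prod.ext he.1 he.2) hr) }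
  obtain ⟨Z, hZ1, hZ2⟩ := L.exists_straight
  refine ⟨Z, ?_, hZ2⟩
  intro a b y e1 e2 e3
  have := hZ1 (nodeAt Y E a b y) ⟨_, nodeAt_mid ⟨e1, e2, e3⟩⟩
  rw [← this]
  rw [nodeAt_mid ⟨e1, e2, e3⟩]
  rfl

/-- interpolation -/
noncomputable def itp (x0 y0 x1 y1 t : ℝ) : ℝ := x0 + (t - y0) / (y1 - y0) * (x1 - x0)

lemma level_realize (hE : ∀ a b, E a b → Y a < Y b) (xv : V → ℝ) (X Q : V → V → ℤ → ℝ)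
    (h1 : ∀ a b, Y a = Y b → xv a = xv b → a = b)
    (h2 : ∀ v a b, E a b → Y a < Y v → Y v < Y b → xv v ≠ X a b (Y v))
    (h3 : ∀ a b c d y, E a b → E c d → Y a < y → y < Y b → Y c < y → y < Y d →
      X a b y = X c d y → a = c ∧ b = d)
    (h4 : ∀ a b c d y, E a b → E c d → Y a ≤ y → y < Y b → Y c ≤ y → y < Y d →
      Q a b y = Q c d y → a = c ∧ b = d)
    (h5 : ∀ a b c d y, E a b → E c d → Y a ≤ y → y < Y b → Y c ≤ y → y < Y d →
      Q a b y < Q c d y → posAt Y xv X a b y ≤ posAt Y xv X c d y ∧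
        posAt Y xv X a b (y + 1) ≤ posAt Y xv X c d (y + 1)) :
    ∃ x : V → ℤ, (∀ a b, Y a = Y b → xv a < xv b → x a < x b) ∧
      (∀ v a b, E a b → Y a < Y v → Y v < Y b →
        (xv v < X a b (Y v) → (x v : ℝ) < itp (x a) (Y a) (x b) (Y b) (Y v)) ∧
        (X a b (Y v) < xv v → itp (x a) (Y a) (x b) (Y b) (Y v) < (x v : ℝ))) ∧
      (∀ a b c d y, E a b → E c d → Y a < y → y < Y b → Y c < y → y < Y d →
        X a b y < X c d y →
          itp (x a) (Y a) (x b) (Y b) y < itp (x c) (Y c) (x d) (Y d) y) := by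
  obtain ⟨Z, hZ1, hZ2⟩ := level_realize_real hE xv X Q h1 h2 h3 h4 h5
  haveI := Fintype.ofFinite V
  let φ : V ⊕ DumT Y E → (V → ℝ) →ₗ[ℝ] ℝ := fun n => match n with
    | Sum.inl v => LinearMap.proj (R := ℝ) (φ := fun _ : V => ℝ) v
    | Sum.inr p => LinearMap.proj (R := ℝ) (φ := fun _ : V => ℝ) p.1.1.1 +
        (((p.1.2 : ℝ) - Y p.1.1.1) / ((Y p.1.1.2 : ℝ) - Y p.1.1.1)) •
          (LinearMap.proj (R := ℝ) (φ := fun _ : V => ℝ) p.1.1.2 -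
            LinearMap.proj (R := ℝ) (φ := fun _ : V => ℝ) p.1.1.1)
  have φl : ∀ v w, φ (Sum.inl v) w = w v := fun v w => rfl
  have φr : ∀ p w, φ (Sum.inr p) w =
    itp (w p.1.1.1) (Y p.1.1.1) (w p.1.1.2) (Y p.1.1.2) p.1.2 := fun p w => rfl
  have hφ : ∀ n, φ n (fun v => Z (Sum.inl v)) = Z n := by
    rintro (v | ⟨⟨⟨a, b⟩, y⟩, e1, e2, e3⟩)
    · rfl
    · rw [φr]
      simp only at e1 e2 e3
      have := discrete_linear (fun y => Z (nodeAt Y E a b y)) (Y a) (Y b) (hE a b e1)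
        (fun y a1 a2 => hZ1 a b y e1 a1 a2) y e2.le e3.le
      beta_reduce at this
      rw [nodeAt_lo le_rfl, nodeAt_hi (hE a b e1) le_rfl, nodeAt_mid ⟨e1, e2, e3⟩] at this
      exact this.symm
  haveI : Finite (DumT Y E) := by
    obtain ⟨A, hA⟩ := (Set.finite_range Y).bddBelow
    obtain ⟨B, hB⟩ := (Set.finite_range Y).bddAbove
    have hA' : ∀ v, A ≤ Y v := fun v => hA ⟨v, rfl⟩
    have hB' : ∀ v, Y v ≤ B := fun v => hB ⟨v, rfl⟩
    exact Set.Finite.to_subtype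
      (((Set.finite_univ (α := V × V)).prod (Set.finite_Icc A B)).subset (by
        rintro ⟨⟨a, b⟩, y⟩ ⟨_, a1, a2⟩
        exact ⟨trivial, (hA' a).trans a1.le, a2.le.trans (hB' b)⟩))
  let ι := {p : (V ⊕ DumT Y E) × (V ⊕ DumT Y E) //
    rowOf Y E p.1 = rowOf Y E p.2 ∧ rOf Y E xv X p.1 < rOf Y E xv X p.2}
  obtain ⟨z, hz⟩ := exists_int_solution (fun p : ι => φ p.1.2 - φ p.1.1)
    (fun v => Z (Sum.inl v)) (fun p => by
      rw [LinearMap.sub_apply, hφ, hφ]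
      have := hZ2 _ _ p.2.1 p.2.2
      linarith)
  have hz' : ∀ n n', rowOf Y E n = rowOf Y E n' → rOf Y E xv X n < rOf Y E xv X n' →
      φ n (fun v => (z v : ℝ)) < φ n' (fun v => (z v : ℝ)) := by
    intro n n' a1 a2
    have := hz ⟨(n, n'), a1, a2⟩
    rw [LinearMap.sub_apply] at this
    linarith
  refine ⟨z, ?_, ?_, ?_⟩
  · intro a b e1 e2
    have := hz' (Sum.inl a) (Sum.inl b) e1 e2
    rw [φl, φl] at this
    exact_mod_cast this
  · intro v a b e1 e2 e3
    exact ⟨fun e4 => hz' (Sum.inl v) (Sum.inr ⟨((a, b), Y v), e1, e2, e3⟩) rfl e4,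
      fun e4 => hz' (Sum.inr ⟨((a, b), Y v), e1, e2, e3⟩) (Sum.inl v) rfl e4⟩
  · intro a b c d y e1 f1 e2 e3 f2 f3 h
    exact hz' (Sum.inr ⟨((a, b), y), e1, e2, e3⟩) (Sum.inr ⟨((c, d), y), f1, f2, f3⟩) rfl h

end Realize

/-! ### Geometry of monotone chains -/

lemma itp_left (x0 y0 x1 y1 : ℝ) : itp x0 y0 x1 y1 y0 = x0 := by simp [itp]

lemma itp_right (x0 y0 x1 y1 : ℝ) (h : y0 < y1) : itp x0 y0 x1 y1 y1 = x1 := by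
  have : y1 - y0 ≠ 0 := by intro h'; linarith
  rw [itp, div_self this]; ring

lemma itp_affine (x0 y0 x1 y1 y s : ℝ) :
    itp x0 y0 x1 y1 (y + s) =
      (1 - s) * itp x0 y0 x1 y1 y + s * itp x0 y0 x1 y1 (y + 1) := by
  simp only [itp, div_eq_mul_inv]; ring

lemma mem_segment_up {p q z : Pt} (h : p.2 < q.2) :
    z ∈ segment ℝ p q ↔ p.2 ≤ z.2 ∧ z.2 ≤ q.2 ∧ z.1 = itp p.1 p.2 q.1 q.2 z.2 := by
  have hpos : 0 < q.2 - p.2 := by linarith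
  constructor
  · rintro ⟨a, b, ha, hb, hab, rfl⟩
    obtain rfl : a = 1 - b := by linarith
    simp only [Prod.snd_add, Prod.smul_snd, smul_eq_mul, Prod.fst_add, Prod.smul_fst, itp]
    refine ⟨by nlinarith, by nlinarith, ?_⟩
    field_simp
    ring
  · rintro ⟨h1, h2, h3⟩
    refine ⟨(q.2 - z.2) / (q.2 - p.2), (z.2 - p.2) / (q.2 - p.2), ?_, ?_, ?_, ?_⟩
    · exact div_nonneg (by linarith) hpos.le
    · exact div_nonneg (by linarith) hpos.le
    · field_simp; ring
    · ext
      · simp only [Prod.fst_add, Prod.smul_fst, smul_eq_mul, h3, itp]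
        field_simp
        ring
      · simp only [Prod.snd_add, Prod.smul_snd, smul_eq_mul]
        field_simp
        ring

lemma mem_segment_flat {p q z : Pt} (h : p.2 = q.2) :
    z ∈ segment ℝ p q ↔ z.2 = p.2 ∧ z.1 ∈ segment ℝ p.1 q.1 := by
  constructor
  · rintro ⟨a, b, ha, hb, hab, rfl⟩
    refine ⟨?_, a, b, ha, hb, hab, rfl⟩
    simp only [Prod.snd_add, Prod.smul_snd, smul_eq_mul, ← h, ← add_mul, hab, one_mul]
  · rintro ⟨h1, a, b, ha, hb, hab, h2⟩
    refine ⟨a, b, ha, hb, hab, ?_⟩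
    ext
    · exact h2
    · simp only [Prod.snd_add, Prod.smul_snd, smul_eq_mul, ← h, ← add_mul, hab, one_mul, h1]

lemma chainSet_nil : chainSet [] = ∅ := by simp [chainSet, chainSegs]

lemma chainSet_single (p : Pt) : chainSet [p] = ∅ := by simp [chainSet, chainSegs]

lemma chainSet_cons (p q : Pt) (l : List Pt) :
    chainSet (p :: q :: l) = segment ℝ p q ∪ chainSet (q :: l) := by
  simp [chainSet, chainSegs]

lemma chainSet_concat (l : List Pt) (q r : Pt) :
    chainSet (l ++ [q] ++ [r]) = chainSet (l ++ [q]) ∪ segment ℝ q r := by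
  induction l with
  | nil => simp [chainSet_cons, chainSet_single]
  | cons p l ih =>
    cases l with
    | nil => simp [chainSet_cons, chainSet_single]
    | cons p' l =>
      have e1 : p :: p' :: l ++ [q] ++ [r] = p :: p' :: (l ++ [q] ++ [r]) := by simp
      have e2 : p :: p' :: l ++ [q] = p :: p' :: (l ++ [q]) := by simp
      have e3 : p' :: (l ++ [q] ++ [r]) = p' :: l ++ [q] ++ [r] := by simp
      have e4 : p' :: (l ++ [q]) = p' :: l ++ [q] := by simp
      rw [e1, e2, chainSet_cons, chainSet_cons, e3, e4, ih, Set.union_assoc]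

lemma chainSet_reverse (l : List Pt) : chainSet l.reverse = chainSet l := by
  induction l with
  | nil => rfl
  | cons p l ih =>
    cases l with
    | nil => rfl
    | cons q l =>
      rw [chainSet_cons, ← ih]
      simp only [List.reverse_cons]
      rw [chainSet_concat, segment_symm, Set.union_comm]

lemma head_mem_chainSet (p q : Pt) (l : List Pt) : p ∈ chainSet (p :: q :: l) := by
  rw [chainSet_cons]; exact Or.inl (left_mem_segment ℝ p q)

/-- ascending chain -/
def Asc (l : List Pt) : Prop := l.Pairwise fun p q => p.2 ≤ q.2

lemma Asc.tail {p : Pt} {l : List Pt} (h : Asc (p :: l)) : Asc l := (List.pairwise_cons.1 h).2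

lemma Asc.head_le {p q : Pt} {l : List Pt} (h : Asc (p :: l)) (hq : q ∈ l) : p.2 ≤ q.2 :=
  (List.pairwise_cons.1 h).1 q hq

lemma segment_snd_mem {p q z : Pt} (h : p.2 ≤ q.2) (hz : z ∈ segment ℝ p q) :
    p.2 ≤ z.2 ∧ z.2 ≤ q.2 := by
  rcases h.lt_or_eq with h | h
  · exact ⟨((mem_segment_up h).1 hz).1, ((mem_segment_up h).1 hz).2.1⟩
  · rw [((mem_segment_flat h).1 hz).1]; exact ⟨le_rfl, h.le⟩

lemma Asc.le_of_mem {p : Pt} {l : List Pt} (h : Asc (p :: l)) {z : Pt}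
    (hz : z ∈ chainSet (p :: l)) : p.2 ≤ z.2 := by
  induction l generalizing p with
  | nil => rw [chainSet_single] at hz; exact hz.elim
  | cons q l ih =>
    have hpq := h.head_le List.mem_cons_self
    rw [chainSet_cons] at hz
    rcases hz with hz | hz
    · exact (segment_snd_mem hpq hz).1
    · exact hpq.trans (ih h.tail hz)

lemma Asc.slice_preconnected {l : List Pt} (h : Asc l) (c : ℝ) :
    IsPreconnected (chainSet l ∩ {z | z.2 = c}) := by
  have hrow : Convex ℝ {z : Pt | z.2 = c} := by
    intro x hx y hy a b _ _ hab
    simp only [Set.mem_ofPred_eq] at *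
    simp only [Prod.snd_add, Prod.smul_snd, smul_eq_mul, hx, hy, ← add_mul, hab, one_mul]
  induction l with
  | nil => rw [chainSet_nil, Set.empty_inter]; exact isPreconnected_empty
  | cons p l ih =>
    cases l with
    | nil => rw [chainSet_single, Set.empty_inter]; exact isPreconnected_empty
    | cons q l =>
      have hpq := h.head_le List.mem_cons_self
      have i1 : IsPreconnected (segment ℝ p q ∩ {z | z.2 = c}) :=
        ((convex_segment p q).inter hrow).isPreconnected
      have i2 := ih h.tail
      rw [chainSet_cons, Set.union_inter_distrib_right]
      rcases lt_trichotomy c q.2 with hc | hc | hc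
      · have : chainSet (q :: l) ∩ {z | z.2 = c} = ∅ := by
          rw [Set.eq_empty_iff_forall_notMem]
          rintro z ⟨h1, h2⟩
          have := h.tail.le_of_mem h1
          have h3 : z.2 = c := h2
          linarith
        rw [this, Set.union_empty]; exact i1
      · cases l with
        | nil => rw [chainSet_single, Set.empty_inter, Set.union_empty]; exact i1
        | cons r l =>
          exact i1.union q ⟨right_mem_segment ℝ p q, hc.symm⟩ ⟨head_mem_chainSet q r l, hc.symm⟩ i2
      · have : segment ℝ p q ∩ {z | z.2 = c} = ∅ := by
          rw [Set.eq_empty_iff_forall_notMem]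
          rintro z ⟨h1, h2⟩
          have := (segment_snd_mem hpq h1).2
          have h3 : z.2 = c := h2
          linarith
        rw [this, Set.empty_union]; exact i2

lemma Asc.slice_ord {l : List Pt} (h : Asc l) (c : ℝ) :
    {x : ℝ | (x, c) ∈ chainSet l}.OrdConnected := by
  have := ((h.slice_preconnected c).image Prod.fst continuous_fst.continuousOn).ordConnected
  have e : {x : ℝ | (x, c) ∈ chainSet l} = Prod.fst '' (chainSet l ∩ {z | z.2 = c}) := by
    ext x
    constructor
    · intro hx; exact ⟨(x, c), ⟨hx, rfl⟩, rfl⟩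
    · rintro ⟨⟨x', c'⟩, ⟨h1, h2⟩, rfl⟩
      have h2 : c' = c := h2
      subst h2; exact h1
  rw [e]; exact this

lemma Asc.strip {p : Pt} {l : List Pt} (h : Asc (p :: l)) (hi : ∀ q ∈ l, ∃ b : ℤ, q.2 = b)
    (y : ℤ) (hp : p.2 ≤ y) (hq : ∃ q ∈ l, (y : ℝ) + 1 ≤ q.2) :
    ∃ x0 x1 : ℝ, segment ℝ ((x0, (y : ℝ)) : Pt) (x1, (y : ℝ) + 1) ⊆ chainSet (p :: l) := by
  induction l generalizing p with
  | nil => obtain ⟨q, hq, _⟩ := hq; simp at hq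
  | cons r l ih =>
    obtain ⟨b, hb⟩ := hi r List.mem_cons_self
    rw [chainSet_cons]
    by_cases hr : r.2 ≤ y
    · obtain ⟨q, hq, hq2⟩ := hq
      rcases List.mem_cons.1 hq with rfl | hq
      · linarith
      obtain ⟨x0, x1, hx⟩ := ih h.tail (fun q hq => hi q (List.mem_cons_of_mem _ hq)) hr ⟨q, hq, hq2⟩
      exact ⟨x0, x1, hx.trans Set.subset_union_right⟩
    · have hr1 : (y : ℝ) + 1 ≤ r.2 := by
        rw [hb] at hr ⊢
        push Not at hr
        have : y < b := by exact_mod_cast hr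
        exact_mod_cast this
      have hlt : p.2 < r.2 := by linarith
      refine ⟨itp p.1 p.2 r.1 r.2 y, itp p.1 p.2 r.1 r.2 (y + 1), ?_⟩
      refine Set.Subset.trans ?_ Set.subset_union_left
      refine (convex_segment p r).segment_subset ?_ ?_
      · exact (mem_segment_up hlt).2 ⟨hp, by simp only; linarith, rfl⟩
      · exact (mem_segment_up hlt).2 ⟨by simp only; linarith, hr1, rfl⟩

lemma two_intervals {A B : Set ℝ} (hA : A.OrdConnected) (hB : B.OrdConnected) {a1 a2 b1 b2 : ℝ}
    (ha1 : a1 ∈ A) (ha2 : a2 ∈ A) (hb1 : b1 ∈ B) (hb2 : b2 ∈ B) (h1 : a1 ≤ b1) (h2 : b2 < a2) :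
    ∃ t, t ∈ A ∧ t ∈ B := by
  rcases le_or_gt b1 a2 with h | h
  · exact ⟨b1, hA.out ha1 ha2 ⟨h1, h⟩, hb1⟩
  · exact ⟨a2, ha2, hB.out hb2 hb1 ⟨h2.le, h.le⟩⟩

/-! ### The abstract straightening theorem -/

theorem abstract_straighten {V : Type} [Finite V] (G : SimpleGraph V) (Y : V → ℤ) (xv : V → ℝ)
    (C : V → V → Set Pt)
    (hinj : ∀ a b, Y a = Y b → xv a = xv b → a = b)
    (hord : ∀ u v, G.Adj u v → ∀ c : ℝ, {x : ℝ | (x, c) ∈ C u v}.OrdConnected)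
    (hmem : ∀ u v, G.Adj u v → (xv u, (Y u : ℝ)) ∈ C u v ∧ (xv v, (Y v : ℝ)) ∈ C u v)
    (hstrip : ∀ u v, G.Adj u v → Y u < Y v → ∀ y, Y u ≤ y → y < Y v →
      ∃ x0 x1 : ℝ, segment ℝ ((x0, (y : ℝ)) : Pt) (x1, (y : ℝ) + 1) ⊆ C u v)
    (hvtx : ∀ u v w, G.Adj u v → (xv w, (Y w : ℝ)) ∈ C u v → w = u ∨ w = v)
    (hedge : ∀ u v p q, G.Adj u v → G.Adj p q → s(u, v) ≠ s(p, q) → ∀ z, z ∈ C u v → z ∈ C p q →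
      ∃ w, (w = u ∨ w = v) ∧ (w = p ∨ w = q) ∧ ((xv w, (Y w : ℝ)) : Pt) = z) :
    ∃ x : V → ℤ, (∀ a b, Y a = Y b → xv a < xv b → x a < x b) ∧
      (∀ u v w, G.Adj u v →
        (((x w : ℝ), (Y w : ℝ)) : Pt) ∈
          segment ℝ (((x u : ℝ), (Y u : ℝ)) : Pt) ((x v : ℝ), (Y v : ℝ)) → w = u ∨ w = v) ∧
      (∀ u v p q, G.Adj u v → G.Adj p q → s(u, v) ≠ s(p, q) → ∀ z : Pt,
        z ∈ segment ℝ (((x u : ℝ), (Y u : ℝ)) : Pt) ((x v : ℝ), (Y v : ℝ)) →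
        z ∈ segment ℝ (((x p : ℝ), (Y p : ℝ)) : Pt) ((x q : ℝ), (Y q : ℝ)) →
        ∃ w, (w = u ∨ w = v) ∧ (w = p ∨ w = q) ∧ (((x w : ℝ), (Y w : ℝ)) : Pt) = z) := by
  classical
  let E : V → V → Prop := fun a b => G.Adj a b ∧ Y a < Y b
  have hst : ∀ u v y, ∃ x0 x1 : ℝ, E u v → Y u ≤ y → y < Y v →
      segment ℝ ((x0, (y : ℝ)) : Pt) (x1, (y : ℝ) + 1) ⊆ C u v := by
    intro u v y
    by_cases h : E u v ∧ Y u ≤ y ∧ y < Y v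
    · obtain ⟨x0, x1, hx⟩ := hstrip u v h.1.1 h.1.2 y h.2.1 h.2.2
      exact ⟨x0, x1, fun _ _ _ => hx⟩
    · exact ⟨0, 0, fun a b c => absurd ⟨a, b, c⟩ h⟩
  choose X X1 hX using hst
  -- points in the strip
  have hpt : ∀ a b y (s : ℝ), E a b → Y a ≤ y → y < Y b → 0 ≤ s → s ≤ 1 →
      (((1 - s) * X a b y + s * X1 a b y, (y : ℝ) + s) : Pt) ∈ C a b := by
    intro a b y s e1 e2 e3 s0 s1
    refine hX a b y e1 e2 e3 ⟨1 - s, s, by linarith, s0, by ring, ?_⟩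
    ext
    · simp
    · simp; ring
  have hpt0 : ∀ a b y, E a b → Y a ≤ y → y < Y b → ((X a b y, (y : ℝ)) : Pt) ∈ C a b := by
    intro a b y e1 e2 e3
    have := hpt a b y 0 e1 e2 e3 le_rfl zero_le_one
    simpa using this
  have hpt1 : ∀ a b y, E a b → Y a ≤ y → y < Y b →
      ((X1 a b y, ((y + 1 : ℤ) : ℝ)) : Pt) ∈ C a b := by
    intro a b y e1 e2 e3
    have := hpt a b y 1 e1 e2 e3 zero_le_one le_rfl
    simpa using this
  have hne : ∀ a b c d, E a b → E c d → ¬ (a = c ∧ b = d) → s(a, b) ≠ s(c, d) := by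
    intro a b c d e f h he
    rw [Sym2.eq_iff] at he
    rcases he with he | ⟨rfl, rfl⟩
    · exact h he
    · exact absurd e.2 (by have := f.2; omega)
  -- common points
  have hcom : ∀ a b c d (t : ℝ) (y : ℤ), E a b → E c d → ¬ (a = c ∧ b = d) →
      ((t, (y : ℝ)) : Pt) ∈ C a b → ((t, (y : ℝ)) : Pt) ∈ C c d →
      ∃ w, (w = a ∨ w = b) ∧ (w = c ∨ w = d) ∧ xv w = t ∧ Y w = y := by
    intro a b c d t y e f h h1 h2
    obtain ⟨w, w1, w2, w3⟩ := hedge a b c d e.1 f.1 (hne a b c d e f h) _ h1 h2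
    rw [Prod.mk.injEq] at w3
    exact ⟨w, w1, w2, w3.1, by exact_mod_cast w3.2⟩
  have hmid : ∀ a b c d (y : ℤ) (s : ℝ), E a b → E c d → Y a ≤ y → y < Y b → Y c ≤ y → y < Y d →
      0 < s → s < 1 →
      (1 - s) * X a b y + s * X1 a b y = (1 - s) * X c d y + s * X1 c d y → a = c ∧ b = d := by
    intro a b c d y s e f e1 e2 f1 f2 s0 s1 heq
    by_contra h
    have p1 := hpt a b y s e e1 e2 s0.le s1.le
    have p2 := hpt c d y s f f1 f2 s0.le s1.le
    rw [← heq] at p2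
    obtain ⟨w, w1, w2, w3⟩ := hedge a b c d e.1 f.1 (hne a b c d e f h) _ p1 p2
    rw [Prod.mk.injEq] at w3
    have a1 : (y : ℝ) < Y w := by linarith [w3.2]
    have a2 : (Y w : ℝ) < y + 1 := by linarith [w3.2]
    have a1' : y < Y w := by exact_mod_cast a1
    have a2' : Y w < y + 1 := by exact_mod_cast a2
    omega
  let Q : V → V → ℤ → ℝ := fun a b y => (1 - 1 / 2) * X a b y + 1 / 2 * X1 a b y
  have hpos : ∀ a b y, E a b → Y a ≤ y → y ≤ Y b →
      ((posAt Y xv X a b y, (y : ℝ)) : Pt) ∈ C a b := by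
    intro a b y e e1 e2
    unfold posAt
    split_ifs with h1 h2
    · obtain rfl : y = Y a := by omega
      exact (hmem a b e.1).1
    · obtain rfl : y = Y b := by omega
      exact (hmem a b e.1).2
    · exact hpt0 a b y e e1 (by omega)
  have posL : ∀ a b y, Y a = y → posAt Y xv X a b y = xv a := by
    intro a b y h; unfold posAt; rw [if_pos h.ge]
  have posR : ∀ a b y, E a b → Y b = y → posAt Y xv X a b y = xv b := by
    intro a b y e h
    have := e.2
    unfold posAt; rw [if_neg (by omega), if_pos h.le]
  have posM : ∀ a b y, Y a < y → y < Y b → posAt Y xv X a b y = X a b y := by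
    intro a b y h h'
    unfold posAt; rw [if_neg (by omega), if_neg (by omega)]
  have h2 : ∀ v a b, E a b → Y a < Y v → Y v < Y b → xv v ≠ X a b (Y v) := by
    intro v a b e e1 e2 heq
    have := hpt0 a b (Y v) e e1.le e2
    rw [← heq] at this
    rcases hvtx a b v e.1 this with rfl | rfl <;> omega
  have h3 : ∀ a b c d y, E a b → E c d → Y a < y → y < Y b → Y c < y → y < Y d →
      X a b y = X c d y → a = c ∧ b = d := by
    intro a b c d y e f e1 e2 f1 f2 heq
    by_contra h
    have p1 := hpt0 a b y e e1.le e2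
    have p2 := hpt0 c d y f f1.le f2
    rw [← heq] at p2
    obtain ⟨w, w1, w2, w3, w4⟩ := hcom a b c d _ y e f h p1 p2
    rcases w1 with rfl | rfl <;> omega
  have h4 : ∀ a b c d y, E a b → E c d → Y a ≤ y → y < Y b → Y c ≤ y → y < Y d →
      Q a b y = Q c d y → a = c ∧ b = d := by
    intro a b c d y e f e1 e2 f1 f2 heq
    exact hmid a b c d y (1 / 2) e f e1 e2 f1 f2 (by norm_num) (by norm_num) heq
  -- crossing
  have hcross : ∀ a b c d y, E a b → E c d → Y a ≤ y → y < Y b → Y c ≤ y → y < Y d →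
      ¬ (a = c ∧ b = d) → (X a b y - X c d y) * (X1 a b y - X1 c d y) < 0 → False := by
    intro a b c d y e f e1 e2 f1 f2 h hneg
    set g0 := X a b y - X c d y with hg0
    set g1 := X1 a b y - X1 c d y with hg1
    apply h
    have hsub : g0 - g1 ≠ 0 := by
      intro h0
      have : g0 = g1 := by linarith
      rw [this] at hneg
      nlinarith [mul_self_nonneg g1]
    have hs : 0 < g0 / (g0 - g1) ∧ g0 / (g0 - g1) < 1 := by
      rcases lt_or_gt_of_ne (show g0 ≠ 0 by rintro h0; rw [h0] at hneg; simp at hneg) with h0 | h0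
      · have h1 : 0 < g1 := by
          by_contra hc; push Not at hc; nlinarith
        exact ⟨div_pos_of_neg_of_neg h0 (by linarith),
          (div_lt_one_of_neg (by linarith)).2 (by linarith)⟩
      · have h1 : g1 < 0 := by
          by_contra hc; push Not at hc; nlinarith
        exact ⟨div_pos h0 (by linarith), (div_lt_one (by linarith)).2 (by linarith)⟩
    refine hmid a b c d y (g0 / (g0 - g1)) e f e1 e2 f1 f2 hs.1 hs.2 ?_
    have : (1 - g0 / (g0 - g1)) * g0 + g0 / (g0 - g1) * g1 = 0 := by
      field_simp; ring
    rw [hg0, hg1] at this ⊢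
    linear_combination this
  have h5 : ∀ a b c d y, E a b → E c d → Y a ≤ y → y < Y b → Y c ≤ y → y < Y d →
      Q a b y < Q c d y → posAt Y xv X a b y ≤ posAt Y xv X c d y ∧
        posAt Y xv X a b (y + 1) ≤ posAt Y xv X c d (y + 1) := by
    intro a b c d y e f e1 e2 f1 f2 hQ
    have h : ¬ (a = c ∧ b = d) := by rintro ⟨rfl, rfl⟩; exact lt_irrefl _ hQ
    have hX0 : X a b y ≤ X c d y := by
      by_contra hc
      push Not at hc
      refine hcross a b c d y e f e1 e2 f1 f2 h (mul_neg_of_pos_of_neg (by linarith) ?_)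
      simp only [Q] at hQ
      linarith
    have hX1 : X1 a b y ≤ X1 c d y := by
      by_contra hc
      push Not at hc
      refine hcross a b c d y e f e1 e2 f1 f2 h (mul_neg_of_neg_of_pos ?_ (by linarith))
      simp only [Q] at hQ
      linarith
    constructor
    · by_contra hc
      push Not at hc
      obtain ⟨t, t1, t2⟩ := two_intervals (hord a b e.1 y) (hord c d f.1 y)
        (hpt0 a b y e e1 e2) (hpos a b y e e1 e2.le) (hpt0 c d y f f1 f2)
        (hpos c d y f f1 f2.le) hX0 hc
      obtain ⟨w, w1, w2, w3, w4⟩ := hcom a b c d t y e f h t1 t2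
      obtain rfl : w = a := w1.resolve_right (by rintro rfl; omega)
      obtain rfl : w = c := w2.resolve_right (by rintro rfl; omega)
      rw [posL _ _ _ w4, posL _ _ _ w4] at hc
      exact lt_irrefl _ hc
    · by_contra hc
      push Not at hc
      obtain ⟨t, t1, t2⟩ := two_intervals (hord a b e.1 ((y + 1 : ℤ) : ℝ))
        (hord c d f.1 ((y + 1 : ℤ) : ℝ))
        (hpt1 a b y e e1 e2) (hpos a b (y + 1) e (by omega) e2) (hpt1 c d y f f1 f2)
        (hpos c d (y + 1) f (by omega) f2) hX1 hc
      obtain ⟨w, w1, w2, w3, w4⟩ := hcom a b c d t (y + 1) e f h t1 t2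
      obtain rfl : w = b := w1.resolve_left (by rintro rfl; omega)
      obtain rfl : w = d := w2.resolve_left (by rintro rfl; omega)
      rw [posR _ _ _ e w4, posR _ _ _ f w4] at hc
      exact lt_irrefl _ hc
  obtain ⟨x, c1, c2, c3⟩ := level_realize (Y := Y) (E := E) (fun a b e => e.2) xv X Q hinj h2 h3 h4 h5
  have c1' : ∀ a b, Y a = Y b → (x a : ℝ) ≤ x b → xv a ≤ xv b := by
    intro a b e hle
    by_contra hc
    push Not at hc
    have h' : (x b : ℝ) < x a := by exact_mod_cast c1 b a e.symm hc
    linarith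
  have xinj : ∀ a b, Y a = Y b → (x a : ℝ) = x b → a = b := fun a b e h =>
    hinj a b e (le_antisymm (c1' a b e h.le) (c1' b a e.symm h.ge))
  let I : V → V → ℝ → ℝ := fun a b t => itp (x a) (Y a) (x b) (Y b) t
  have IL : ∀ a b, I a b (Y a) = x a := fun a b => itp_left _ _ _ _
  have IR : ∀ a b, E a b → I a b (Y b) = x b := fun a b e =>
    itp_right _ _ _ _ (by exact_mod_cast e.2)
  -- classification of items
  have item : ∀ a b (y : ℤ), E a b → Y a ≤ y → y ≤ Y b →
      (∃ v, (v = a ∨ v = b) ∧ Y v = y ∧ posAt Y xv X a b y = xv v ∧ I a b y = x v) ∨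
      (Y a < y ∧ y < Y b ∧ posAt Y xv X a b y = X a b y) := by
    intro a b y e e1 e2
    rcases e1.lt_or_eq with e1 | e1
    · rcases e2.lt_or_eq with e2 | e2
      · exact Or.inr ⟨e1, e2, posM a b y e1 e2⟩
      · refine Or.inl ⟨b, Or.inr rfl, e2.symm, posR _ _ _ e e2.symm, ?_⟩
        rw [e2]; exact IR a b e
    · refine Or.inl ⟨a, Or.inl rfl, e1, posL _ _ _ e1, ?_⟩
      rw [← e1]; exact IL a b
  have K : ∀ a b c d (y : ℤ), E a b → E c d → Y a ≤ y → y ≤ Y b → Y c ≤ y → y ≤ Y d →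
      posAt Y xv X a b y < posAt Y xv X c d y → I a b y < I c d y := by
    intro a b c d y e f e1 e2 f1 f2 hlt
    rcases item a b y e e1 e2 with ⟨v, v1, v2, v3, v4⟩ | ⟨v1, v2, v3⟩ <;>
    rcases item c d y f f1 f2 with ⟨w, w1, w2, w3, w4⟩ | ⟨w1, w2, w3⟩ <;>
    rw [v3, w3] at hlt
    · rw [v4, w4]; exact_mod_cast c1 v w (by omega) hlt
    · rw [v4]
      subst v2
      exact (c2 v c d f w1 w2).1 hlt
    · rw [w4]
      subst w2
      exact (c2 w a b e v1 v2).2 hlt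
    · exact c3 a b c d y e f v1 v2 w1 w2 hlt
  have K' : ∀ a b c d (y : ℤ), E a b → E c d → ¬ (a = c ∧ b = d) →
      Y a ≤ y → y ≤ Y b → Y c ≤ y → y ≤ Y d → I a b y = I c d y →
      ∃ w, (w = a ∨ w = b) ∧ (w = c ∨ w = d) ∧ Y w = y := by
    intro a b c d y e f h e1 e2 f1 f2 heq
    have hp : posAt Y xv X a b y = posAt Y xv X c d y := by
      rcases lt_trichotomy (posAt Y xv X a b y) (posAt Y xv X c d y) with hc | hc | hc
      · have := K a b c d y e f e1 e2 f1 f2 hc; linarith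
      · exact hc
      · have := K c d a b y f e f1 f2 e1 e2 hc; linarith
    have p1 := hpos a b y e e1 e2
    have p2 := hpos c d y f f1 f2
    rw [← hp] at p2
    obtain ⟨w, w1, w2, _, w4⟩ := hcom a b c d _ y e f h p1 p2
    exact ⟨w, w1, w2, w4⟩
  have Kle : ∀ a b c d (y : ℤ), E a b → E c d → Y a ≤ y → y ≤ Y b → Y c ≤ y → y ≤ Y d →
      posAt Y xv X a b y ≤ posAt Y xv X c d y → I a b y ≤ I c d y := by
    intro a b c d y e f e1 e2 f1 f2 hle
    rcases hle.lt_or_eq with hlt | heq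
    · exact (K a b c d y e f e1 e2 f1 f2 hlt).le
    · by_cases h : a = c ∧ b = d
      · obtain ⟨rfl, rfl⟩ := h; exact le_rfl
      have p1 := hpos a b y e e1 e2
      have p2 := hpos c d y f f1 f2
      rw [← heq] at p2
      obtain ⟨w, w1, w2, w3, w4⟩ := hcom a b c d _ y e f h p1 p2
      have q1 : I a b y = x w := by
        rw [← w4]
        rcases w1 with rfl | rfl
        · exact IL _ _
        · exact IR _ _ e
      have q2 : I c d y = x w := by
        rw [← w4]
        rcases w2 with rfl | rfl
        · exact IL _ _
        · exact IR _ _ f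
      rw [q1, q2]
  -- membership in segments
  have segE : ∀ a b (z : Pt), E a b →
      (z ∈ segment ℝ (((x a : ℝ), (Y a : ℝ)) : Pt) ((x b : ℝ), (Y b : ℝ)) ↔
        (Y a : ℝ) ≤ z.2 ∧ z.2 ≤ Y b ∧ z.1 = I a b z.2) := fun a b z e =>
    mem_segment_up (p := ((x a : ℝ), (Y a : ℝ))) (q := ((x b : ℝ), (Y b : ℝ)))
      (by simp only; exact_mod_cast e.2)
  have segF : ∀ u v (z : Pt), Y u = Y v →
      (z ∈ segment ℝ (((x u : ℝ), (Y u : ℝ)) : Pt) ((x v : ℝ), (Y v : ℝ)) ↔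
        z.2 = Y u ∧ z.1 ∈ segment ℝ (x u : ℝ) (x v)) := fun u v z e =>
    mem_segment_flat (p := ((x u : ℝ), (Y u : ℝ))) (q := ((x v : ℝ), (Y v : ℝ)))
      (by simp only; rw [e])
  have VEup : ∀ a b w, E a b → (((x w : ℝ), (Y w : ℝ)) : Pt) ∈
      segment ℝ (((x a : ℝ), (Y a : ℝ)) : Pt) ((x b : ℝ), (Y b : ℝ)) → w = a ∨ w = b := by
    intro a b w e hw
    obtain ⟨w1, w2, w3⟩ := (segE a b _ e).1 hw
    simp only at w1 w2 w3
    have w1 : Y a ≤ Y w := by exact_mod_cast w1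
    have w2 : Y w ≤ Y b := by exact_mod_cast w2
    rcases item a b (Y w) e w1 w2 with ⟨v, v1, v2, v3, v4⟩ | ⟨v1, v2, v3⟩
    · obtain rfl : w = v := xinj w v v2.symm (by rw [w3, v4])
      exact v1
    · rcases lt_or_gt_of_ne (h2 w a b e v1 v2) with hl | hl
      · have := (c2 w a b e v1 v2).1 hl
        rw [w3] at this
        exact absurd this (lt_irrefl _)
      · have := (c2 w a b e v1 v2).2 hl
        rw [w3] at this
        exact absurd this (lt_irrefl _)
  have VE : ∀ u v w, G.Adj u v → (((x w : ℝ), (Y w : ℝ)) : Pt) ∈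
      segment ℝ (((x u : ℝ), (Y u : ℝ)) : Pt) ((x v : ℝ), (Y v : ℝ)) → w = u ∨ w = v := by
    intro u v w huv hw
    rcases lt_trichotomy (Y u) (Y v) with h | h | h
    · exact VEup u v w ⟨huv, h⟩ hw
    · obtain ⟨w1, w2⟩ := (segF u v _ h).1 hw
      simp only at w1 w2
      have w1 : Y w = Y u := by exact_mod_cast w1
      rw [segment_eq_uIcc, Set.mem_uIcc] at w2
      apply hvtx u v w huv
      have o := hord u v huv (Y w)
      have m1 := (hmem u v huv).1
      have m2 := (hmem u v huv).2
      rw [← h] at m2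
      rw [← w1] at m1 m2
      rcases w2 with ⟨w2, w3⟩ | ⟨w2, w3⟩
      · exact o.out m1 m2 ⟨c1' _ _ (by omega) w2, c1' _ _ (by omega) w3⟩
      · exact o.out m2 m1 ⟨c1' _ _ (by omega) w2, c1' _ _ (by omega) w3⟩
    · rw [segment_symm] at hw
      exact (VEup v u w ⟨huv.symm, h⟩ hw).symm
  -- two non-horizontal edges
  have EEup : ∀ a b c d, E a b → E c d → ¬ (a = c ∧ b = d) → ∀ z : Pt,
      z ∈ segment ℝ (((x a : ℝ), (Y a : ℝ)) : Pt) ((x b : ℝ), (Y b : ℝ)) →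
      z ∈ segment ℝ (((x c : ℝ), (Y c : ℝ)) : Pt) ((x d : ℝ), (Y d : ℝ)) →
      ∃ w, (w = a ∨ w = b) ∧ (w = c ∨ w = d) ∧ (((x w : ℝ), (Y w : ℝ)) : Pt) = z := by
    intro a b c d e f h z hz1 hz2
    obtain ⟨a1, a2, a3⟩ := (segE a b z e).1 hz1
    obtain ⟨b1, b2, b3⟩ := (segE c d z f).1 hz2
    obtain ⟨t1, t2⟩ := z
    simp only at a1 a2 a3 b1 b2 b3
    by_cases ht : t2 = (⌊t2⌋ : ℝ)
    · generalize ⌊t2⌋ = y at ht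
      subst ht
      obtain ⟨w, w1, w2, w4⟩ := K' a b c d y e f h (by exact_mod_cast a1) (by exact_mod_cast a2)
        (by exact_mod_cast b1) (by exact_mod_cast b2) (by rw [← a3, b3])
      refine ⟨w, w1, w2, ?_⟩
      rw [a3, ← w4]
      rcases w1 with rfl | rfl
      · rw [IL]
      · rw [IR _ _ e]
    · exfalso
      have l1 : (⌊t2⌋ : ℝ) < t2 := lt_of_le_of_ne (Int.floor_le t2) (Ne.symm ht)
      have l2 : t2 < ⌊t2⌋ + 1 := Int.lt_floor_add_one t2
      generalize ⌊t2⌋ = y at l1 l2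
      have low : ∀ k : ℤ, (k : ℝ) ≤ t2 → k ≤ y := by
        intro k hk
        have : (k : ℝ) < y + 1 := by linarith
        have : k < y + 1 := by exact_mod_cast this
        omega
      have upp : ∀ k : ℤ, t2 ≤ (k : ℝ) → y < k := by
        intro k hk
        have : (y : ℝ) < k := by linarith
        exact_mod_cast this
      have e1 := low _ a1
      have e2 := upp _ a2
      have f1 := low _ b1
      have f2 := upp _ b2
      have aff : ∀ a b, I a b t2 = (1 - (t2 - y)) * I a b y + (t2 - y) * I a b ((y + 1 : ℤ) : ℝ) := by
        intro a b
        have := itp_affine (x a) (Y a) (x b) (Y b) y (t2 - y)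
        rw [show (y : ℝ) + (t2 - y) = t2 by ring] at this
        push_cast
        exact this
      have hkey : I a b y = I c d y ∧ I a b ((y + 1 : ℤ) : ℝ) = I c d ((y + 1 : ℤ) : ℝ) := by
        have hz := a3.symm.trans b3
        rw [aff a b, aff c d] at hz
        have s0 : 0 < t2 - y := by linarith
        have s1 : 0 < 1 - (t2 - y) := by linarith
        rcases lt_trichotomy (Q a b y) (Q c d y) with hq | hq | hq
        · obtain ⟨q1, q2⟩ := h5 a b c d y e f e1 e2 f1 f2 hq
          have r1 := Kle a b c d y e f e1 e2.le f1 f2.le q1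
          have r2 := Kle a b c d (y + 1) e f (by omega) e2 (by omega) f2 q2
          constructor
          · by_contra hcon
            have := mul_pos s1 (sub_pos.2 (lt_of_le_of_ne r1 hcon))
            have := mul_nonneg s0.le (sub_nonneg.2 r2)
            linarith
          · by_contra hcon
            have := mul_nonneg s1.le (sub_nonneg.2 r1)
            have := mul_pos s0 (sub_pos.2 (lt_of_le_of_ne r2 hcon))
            linarith
        · exact absurd (h4 a b c d y e f e1 e2 f1 f2 hq) h
        · obtain ⟨q1, q2⟩ := h5 c d a b y f e f1 f2 e1 e2 hq
          have r1 := Kle c d a b y f e f1 f2.le e1 e2.le q1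
          have r2 := Kle c d a b (y + 1) f e (by omega) f2 (by omega) e2 q2
          constructor
          · by_contra hcon
            have := mul_pos s1 (sub_pos.2 (lt_of_le_of_ne r1 (Ne.symm hcon)))
            have := mul_nonneg s0.le (sub_nonneg.2 r2)
            linarith
          · by_contra hcon
            have := mul_nonneg s1.le (sub_nonneg.2 r1)
            have := mul_pos s0 (sub_pos.2 (lt_of_le_of_ne r2 (Ne.symm hcon)))
            linarith
      obtain ⟨w, w1, w2, w4⟩ := K' a b c d y e f h e1 e2.le f1 f2.le hkey.1
      obtain ⟨v, v1, v2, v4⟩ := K' a b c d (y + 1) e f h (by omega) e2 (by omega) f2 hkey.2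
      have q1 : w = a := w1.resolve_right (by rintro rfl; omega)
      have q2 : w = c := w2.resolve_right (by rintro rfl; omega)
      have q3 : v = b := v1.resolve_left (by rintro rfl; omega)
      have q4 : v = d := v2.resolve_left (by rintro rfl; omega)
      exact h ⟨q1.symm.trans q2, q3.symm.trans q4⟩
  -- a non-horizontal and a horizontal edge
  have EFup : ∀ a b u v, E a b → G.Adj u v → Y u = Y v → ∀ z : Pt,
      z ∈ segment ℝ (((x a : ℝ), (Y a : ℝ)) : Pt) ((x b : ℝ), (Y b : ℝ)) →
      z ∈ segment ℝ (((x u : ℝ), (Y u : ℝ)) : Pt) ((x v : ℝ), (Y v : ℝ)) →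
      ∃ w, (w = a ∨ w = b) ∧ (w = u ∨ w = v) ∧ (((x w : ℝ), (Y w : ℝ)) : Pt) = z := by
    intro a b u v e huv hY z hz1 hz2
    obtain ⟨a1, a2, a3⟩ := (segE a b z e).1 hz1
    obtain ⟨b1, b2⟩ := (segF u v z hY).1 hz2
    obtain ⟨t1, t2⟩ := z
    simp only at a1 a2 a3 b1 b2
    subst b1
    have a1 : Y a ≤ Y u := by exact_mod_cast a1
    have a2 : Y u ≤ Y b := by exact_mod_cast a2
    rcases item a b (Y u) e a1 a2 with ⟨w, v1, v2, v3, v4⟩ | ⟨v1, v2, v3⟩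
    · have hwz : (((x w : ℝ), (Y w : ℝ)) : Pt) = (t1, (Y u : ℝ)) := by
        rw [a3, v4, v2]
      refine ⟨w, v1, ?_, hwz⟩
      rw [← hwz] at hz2
      exact VE u v w huv hz2
    · exfalso
      have k1 : ∀ w, Y w = Y u → (x w : ℝ) ≤ t1 → xv w ≤ X a b (Y u) := by
        intro w hw hle
        by_contra hc
        push Not at hc
        rw [← hw] at v1 v2 hc a3
        have := (c2 w a b e v1 v2).2 hc
        have h' : I a b (Y w) < x w := this
        linarith
      have k2 : ∀ w, Y w = Y u → t1 ≤ (x w : ℝ) → X a b (Y u) ≤ xv w := by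
        intro w hw hle
        by_contra hc
        push Not at hc
        rw [← hw] at v1 v2 hc a3
        have := (c2 w a b e v1 v2).1 hc
        have h' : (x w : ℝ) < I a b (Y w) := this
        linarith
      have m1 := (hmem u v huv).1
      have m2 := (hmem u v huv).2
      rw [← hY] at m2
      have o := hord u v huv (Y u)
      have hin : ((X a b (Y u), (Y u : ℝ)) : Pt) ∈ C u v := by
        rw [segment_eq_uIcc, Set.mem_uIcc] at b2
        rcases b2 with ⟨w2, w3⟩ | ⟨w2, w3⟩
        · exact o.out m1 m2 ⟨k1 _ rfl w2, k2 _ hY.symm w3⟩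
        · exact o.out m2 m1 ⟨k1 _ hY.symm w2, k2 _ rfl w3⟩
      have hs : s(a, b) ≠ s(u, v) := by
        intro he
        have := e.2
        rw [Sym2.eq_iff] at he
        rcases he with ⟨rfl, rfl⟩ | ⟨rfl, rfl⟩ <;> omega
      obtain ⟨w, w1, w2, w3⟩ := hedge a b u v e.1 huv hs _ (hpt0 a b (Y u) e v1.le v2) hin
      rw [Prod.mk.injEq] at w3
      have w3 : Y w = Y u := by exact_mod_cast w3.2
      rcases w1 with rfl | rfl <;> omega
  -- two horizontal edges
  have FF : ∀ u v p q, G.Adj u v → G.Adj p q → Y u = Y v → Y p = Y q → s(u, v) ≠ s(p, q) →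
      (x u : ℝ) ≤ x v → (x p : ℝ) ≤ x q → (x u : ℝ) ≤ x p → ∀ z : Pt,
      z ∈ segment ℝ (((x u : ℝ), (Y u : ℝ)) : Pt) ((x v : ℝ), (Y v : ℝ)) →
      z ∈ segment ℝ (((x p : ℝ), (Y p : ℝ)) : Pt) ((x q : ℝ), (Y q : ℝ)) →
      ∃ w, (w = u ∨ w = v) ∧ (w = p ∨ w = q) ∧ (((x w : ℝ), (Y w : ℝ)) : Pt) = z := by
    intro u v p q huv hpq hY hY' hs l1 l2 l3 z hz1 hz2
    obtain ⟨a1, a2⟩ := (segF u v z hY).1 hz1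
    obtain ⟨b1, b2⟩ := (segF p q z hY').1 hz2
    obtain ⟨t1, t2⟩ := z
    simp only at a1 a2 b1 b2
    rw [segment_eq_Icc l1] at a2
    rw [segment_eq_Icc l2] at b2
    have hYY : Y u = Y p := by
      have : (Y u : ℝ) = Y p := by linarith
      exact_mod_cast this
    have pin : p = u ∨ p = v := by
      apply VE u v p huv
      rw [segF u v _ hY, segment_eq_Icc l1]
      exact ⟨by simp only; rw [hYY], l3, b2.1.trans a2.2⟩
    rcases pin with rfl | rfl
    · exfalso
      rcases le_total (x q : ℝ) (x v) with h | h
      · have : q = p ∨ q = v := by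
          apply VE p v q huv
          rw [segF p v _ hY, segment_eq_Icc l1]
          exact ⟨by simp only; rw [hY'], l2, h⟩
        rcases this with rfl | rfl
        · exact hpq.ne rfl
        · exact hs rfl
      · have : v = p ∨ v = q := by
          apply VE p q v hpq
          rw [segF p q _ hY', segment_eq_Icc l2]
          exact ⟨by simp only; rw [hY], l1, h⟩
        rcases this with rfl | rfl
        · exact huv.ne rfl
        · exact hs rfl
    · refine ⟨p, Or.inr rfl, Or.inl rfl, ?_⟩
      rw [Prod.mk.injEq]
      exact ⟨le_antisymm b2.1 a2.2, b1.symm⟩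
  have FF' : ∀ u v p q, G.Adj u v → G.Adj p q → Y u = Y v → Y p = Y q → s(u, v) ≠ s(p, q) →
      (x u : ℝ) ≤ x v → (x p : ℝ) ≤ x q → ∀ z : Pt,
      z ∈ segment ℝ (((x u : ℝ), (Y u : ℝ)) : Pt) ((x v : ℝ), (Y v : ℝ)) →
      z ∈ segment ℝ (((x p : ℝ), (Y p : ℝ)) : Pt) ((x q : ℝ), (Y q : ℝ)) →
      ∃ w, (w = u ∨ w = v) ∧ (w = p ∨ w = q) ∧ (((x w : ℝ), (Y w : ℝ)) : Pt) = z := by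
    intro u v p q huv hpq hY hY' hs l1 l2 z hz1 hz2
    rcases le_total (x u : ℝ) (x p) with h | h
    · exact FF u v p q huv hpq hY hY' hs l1 l2 h z hz1 hz2
    · obtain ⟨w, w1, w2, w3⟩ := FF p q u v hpq huv hY' hY hs.symm l2 l1 h z hz2 hz1
      exact ⟨w, w2, w1, w3⟩
  -- orientation
  have orient : ∀ u v, G.Adj u v → ∃ a b, G.Adj a b ∧ s(u, v) = s(a, b) ∧
      (Y a < Y b ∨ (Y a = Y b ∧ (x a : ℝ) ≤ x b)) ∧
      segment ℝ (((x u : ℝ), (Y u : ℝ)) : Pt) ((x v : ℝ), (Y v : ℝ)) =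
        segment ℝ (((x a : ℝ), (Y a : ℝ)) : Pt) ((x b : ℝ), (Y b : ℝ)) ∧
      ∀ w, (w = a ∨ w = b) → (w = u ∨ w = v) := by
    intro u v huv
    by_cases h : Y u < Y v ∨ (Y u = Y v ∧ (x u : ℝ) ≤ x v)
    · exact ⟨u, v, huv, rfl, h, rfl, fun _ h => h⟩
    · refine ⟨v, u, huv.symm, Sym2.eq_swap, ?_, segment_symm ℝ _ _, fun _ h => h.symm⟩
      push Not at h
      rcases h.1.lt_or_eq with h' | h'
      · exact Or.inl h'
      · exact Or.inr ⟨h', (h.2 h'.symm).le⟩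
  refine ⟨x, c1, VE, ?_⟩
  intro u v p q huv hpq hs z hz1 hz2
  obtain ⟨a, b, hab, s1, o1, g1, w1⟩ := orient u v huv
  obtain ⟨c, d, hcd, s2, o2, g2, w2⟩ := orient p q hpq
  rw [g1] at hz1
  rw [g2] at hz2
  rw [s1, s2] at hs
  suffices H : ∃ w, (w = a ∨ w = b) ∧ (w = c ∨ w = d) ∧ (((x w : ℝ), (Y w : ℝ)) : Pt) = z by
    obtain ⟨w, k1, k2, k3⟩ := H
    exact ⟨w, w1 w k1, w2 w k2, k3⟩
  rcases o1 with o1 | ⟨o1, o1'⟩ <;> rcases o2 with o2 | ⟨o2, o2'⟩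
  · exact EEup a b c d ⟨hab, o1⟩ ⟨hcd, o2⟩ (by rintro ⟨rfl, rfl⟩; exact hs rfl) z hz1 hz2
  · exact EFup a b c d ⟨hab, o1⟩ hcd o2 z hz1 hz2
  · obtain ⟨w, k1, k2, k3⟩ := EFup c d a b ⟨hcd, o2⟩ hab o1 z hz2 hz1
    exact ⟨w, k2, k1, k3⟩
  · exact FF' a b c d hab hcd o1 o2 hs o1' o2' z hz1 hz2

lemma asc_of_isChain {l : List Pt} (h : (l.map Prod.snd).Chain' (· ≤ ·)) : Asc l := by
  have h1 : (l.map Prod.snd).IsChain (· ≤ ·) := h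
  rw [List.isChain_iff_pairwise, List.pairwise_map] at h1
  exact h1

lemma asc_of_isChain' {l : List Pt} (h : (l.map Prod.snd).Chain' (fun a b => b ≤ a)) :
    Asc l.reverse := by
  have h1 : (l.map Prod.snd).IsChain (fun a b => a ≥ b) := h
  rw [List.isChain_iff_pairwise, List.pairwise_map] at h1
  unfold Asc
  rw [List.pairwise_reverse]
  exact h1

lemma PolylineDrawing.chain_reverse {V : Type*} {G : SimpleGraph V} (D : PolylineDrawing G)
    (u v : V) : (D.chain u v).reverse = D.chain v u := by
  simp [PolylineDrawing.chain, D.bends_symm u v]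

/-- Any planar y-monotone poly-line drawing `D` of height `h` of a
finite simple graph `G` can be transformed into a planar straight-line drawing with
the same y-coordinates and the same left-to-right order in each row; in particular
this straight-line drawing has height `h` as well. -/
theorem yMonotonePolyline_to_straightLine {V : Type} [Fintype V] (G : SimpleGraph V)
    (h : ℕ) (D : PolylineDrawing G) (hpl : D.IsPlanar) (hint : D.IntCoords)
    (hmono : D.IsYMonotone) (hheight : D.InHeight h) :
    ∃ D' : PolylineDrawing G, D'.IsStraightLine ∧ D'.IsPlanar ∧ D'.IntCoords ∧
      (∀ v, (D'.pos v).2 = (D.pos v).2) ∧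
      (∀ v w : V, (D.pos v).2 = (D.pos w).2 → (D.pos v).1 < (D.pos w).1 →
        (D'.pos v).1 < (D'.pos w).1) ∧
      D'.InHeight h := by
  obtain ⟨pinj, _, pv, pe⟩ := hpl
  have hposmem : ∀ v, D.pos v ∈ D.points := fun v => Or.inl ⟨v, rfl⟩
  have hbmem : ∀ u v, G.Adj u v → ∀ p ∈ D.bends u v, p ∈ D.points := by
    intro u v huv p hp
    refine Or.inr ?_
    simp only [Set.mem_iUnion]
    exact ⟨u, v, huv, hp⟩
  have hY : ∀ v, ∃ b : ℤ, (D.pos v).2 = b := fun v => (hint _ (hposmem v)).2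
  choose Y hY using hY
  have hP : ∀ v, (((D.pos v).1, (Y v : ℝ)) : Pt) = D.pos v := fun v => by rw [← hY]
  have hasc : ∀ u v, G.Adj u v → Asc (D.chain u v) ∨ Asc (D.chain v u) := by
    intro u v huv
    rcases hmono u v huv with h | h
    · exact Or.inl (asc_of_isChain h)
    · right
      rw [← D.chain_reverse]
      exact asc_of_isChain' h
  have hcur : ∀ u v, D.curve u v = D.curve v u := by
    intro u v
    unfold PolylineDrawing.curve
    rw [← D.chain_reverse, chainSet_reverse]
  have hhead : ∀ u v, D.pos u ∈ D.curve u v := by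
    intro u v
    unfold PolylineDrawing.curve PolylineDrawing.chain
    cases D.bends u v with
    | nil => exact head_mem_chainSet _ _ _
    | cons p l => exact head_mem_chainSet _ _ _
  obtain ⟨x, c1, c2, c3⟩ := abstract_straighten G Y (fun v => (D.pos v).1) D.curve
    (by
      intro a b h1 h2
      apply pinj
      rw [← hP a, ← hP b, h1]
      rw [h2])
    (by
      intro u v huv c
      rcases hasc u v huv with h | h
      · exact h.slice_ord c
      · rw [hcur]; exact h.slice_ord c)
    (by
      intro u v _
      simp only [hP]
      exact ⟨hhead u v, by rw [hcur]; exact hhead v u⟩)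
    (by
      intro u v huv hlt y h1 h2
      rcases hasc u v huv with h | h
      · unfold PolylineDrawing.curve
        unfold PolylineDrawing.chain at h ⊢
        refine h.strip ?_ y ?_ ⟨D.pos v, by simp, ?_⟩
        · intro q hq
          rcases List.mem_append.1 hq with hq | hq
          · exact (hint q (hbmem u v huv q hq)).2
          · rw [List.mem_singleton.1 hq]; exact ⟨_, hY v⟩
        · rw [hY]; exact_mod_cast h1
        · rw [hY]; exact_mod_cast h2
      · exfalso
        unfold PolylineDrawing.chain at h
        have := h.head_le (q := D.pos u) (by simp)
        rw [hY, hY] at this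
        have : Y v ≤ Y u := by exact_mod_cast this
        omega)
    (by
      intro u v w huv hw
      simp only [hP] at hw
      by_contra hc
      push Not at hc
      exact pv u v w huv hc.1 hc.2 hw)
    (by
      intro u v p q huv hpq hs z hz1 hz2
      obtain ⟨w, ⟨w1, w2⟩, w3⟩ := pe u v p q huv hpq hs ⟨hz1, hz2⟩
      refine ⟨w, w1, w2, ?_⟩
      simp only [hP]
      exact w3)
  let D' : PolylineDrawing G :=
    { pos := fun v => ((x v : ℝ), (Y v : ℝ))
      bends := fun _ _ => []
      bends_symm := fun _ _ => rfl }
  have hcurve : ∀ u v, D'.curve u v =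
      segment ℝ (((x u : ℝ), (Y u : ℝ)) : Pt) ((x v : ℝ), (Y v : ℝ)) := by
    intro u v
    show chainSet [_, _] = _
    rw [chainSet_cons, chainSet_single, Set.union_empty]
  have hpoints : ∀ p ∈ D'.points, ∃ v, p = ((x v : ℝ), (Y v : ℝ)) := by
    rintro p (⟨v, rfl⟩ | hp)
    · exact ⟨v, rfl⟩
    · simp only [Set.mem_iUnion] at hp
      obtain ⟨u, v, _, hp⟩ := hp
      exact absurd hp List.not_mem_nil
  have hinj' : Function.Injective D'.pos := by
    intro a b hab
    have hab' : (((x a : ℝ), (Y a : ℝ)) : Pt) = ((x b : ℝ), (Y b : ℝ)) := hab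
    rw [Prod.mk.injEq] at hab'
    have hx : x a = x b := by exact_mod_cast hab'.1
    have hy : Y a = Y b := by exact_mod_cast hab'.2
    apply pinj
    rw [← hP a, ← hP b, hy]
    rcases lt_trichotomy (D.pos a).1 (D.pos b).1 with hl | hl | hl
    · have := c1 a b hy hl; omega
    · rw [hl]
    · have := c1 b a hy.symm hl; omega
  refine ⟨D', fun _ _ => rfl, ⟨hinj', ?_, ?_, ?_⟩, ?_, ?_, ?_, ?_⟩
  · intro u v huv
    have hne : D'.pos u ≠ D'.pos v := fun he => huv.ne (hinj' he)
    refine ⟨⟨?_, ?_, ?_⟩, ?_⟩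
    · exact le_rfl
    · show [D'.pos u, D'.pos v].Nodup
      simp [hne]
    · intro i j hij hi hj
      have : (chainSegs (D'.chain u v)).length = 1 := rfl
      omega
    · intro i hi
      have : (D'.chain u v).length = 2 := rfl
      omega
  · intro u v w huv hwu hwv hw
    rw [hcurve] at hw
    rcases c2 u v w huv hw with h | h
    · exact hwu h
    · exact hwv h
  · rintro u v p q huv hpq hs z ⟨hz1, hz2⟩
    rw [hcurve] at hz1 hz2
    obtain ⟨w, w1, w2, w3⟩ := c3 u v p q huv hpq hs z hz1 hz2
    exact ⟨w, ⟨w1, w2⟩, w3⟩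
  · intro p hp
    obtain ⟨v, rfl⟩ := hpoints p hp
    exact ⟨⟨_, rfl⟩, ⟨_, rfl⟩⟩
  · intro v
    exact (hY v).symm
  · intro v w h1 h2
    rw [hY, hY] at h1
    have := c1 v w (by exact_mod_cast h1) h2
    show (x v : ℝ) < x w
    exact_mod_cast this
  · obtain ⟨y0, hy0⟩ := hheight
    refine ⟨y0, fun p hp => ?_⟩
    obtain ⟨v, rfl⟩ := hpoints p hp
    have := hy0 _ (hposmem v)
    rw [hY] at this
    exact this
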